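/- Let n, k, d be integers with d ≥ 2 and 1 ≤ k ≤ n−1. A tree with boundary G has the Faber-Krahn property in the class T_d^{(n,k)} of all trees with boundary with n vertices and k interior vertices in which every interior vertex has degree at least d, if and only if G is an SLO*-tree in which exactly one interior vertex has degree d° = d + Σ_{v∈V₀}(d_v − d) (equivalently d° = (n+k−2) − (k−1)d, since the interior degrees of any tree in the class sum to n+k−2) and all other interior vertices have degree exactly d. Moreover G is then uniquely determined up to isomorphism. -/

import Mathlib

/-!
Let `f` be the first Dirichlet eigenfunction of a tree `G` of the class, positive on the interior
(`lambda_spec`), and number the vertices so that `f` decreases; the `k` interior vertices then come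
first. Summation by parts (`qf_layer`) writes the energy of `f` as
`∑ (f a - f (a+1)) (f b - f (b+1)) c(a+1, b+1)`, where `c(a, b)` is the degree sum of the first
`min a b` vertices minus the number of adjacent pairs `(i, j)` with `i < a` and `j < b`. For
`a ≤ b` this number is at most the degree sum `D` of the first `a` vertices, and at most `a + b - 2`
because subgraphs of a tree are forests. Hence `c(a, b) ≥ max 0 (D - (a + b - 2))`, with equality
if the numbering enumerates the tree breadth first (`Spiral.cnt_eq`). Since `D` is smallest for the
degrees `d, …, d, d°`, the spiral tree `optTree` with these degrees minimises every coefficient at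
once (`Sorted.term_le`), so `λ(optTree) ≤ λ(G)` (`compare`).

If `λ(G) = λ(optTree)`, then `f` is also an eigenfunction of `optTree`, and all coefficients
`c(a, b)` at ends of level sets of `f` agree (`Ext.lev`). Inside a level set, a comparison of
eigenvalue equations (`Eig.tie`) shows that vertices with equal values have children with equal
values. It follows that every vertex but the first has exactly one smaller neighbour, its parent
(`Ext.parent`), and that the parents of vertices with different values are in the correct order
(`Ext.no_cross`). Exchanging vertices with equal values until the sequence of parents is
lexicographically minimal turns `G` into a spiral tree with the degrees of `optTree`
(`Ext.iso_opt`), and a spiral tree is determined by its degrees (`Spiral.unique`).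

Numbering an SLO*-tree along its ordering also gives a spiral tree, and if only one interior degree
differs from `d` then, by the monotonicity of the degrees, it is the last one; so this tree is
`optTree` again (`iso_of_SLO`).
-/

/-!
Common definitions for Faber-Krahn type inequalities for trees
(Bıyıkoğlu–Leydold, "Faber-Krahn Type Inequalities for Trees").

A *tree (graph) with boundary* is a finite simple connected graph in which
boundary vertices are exactly the vertices of degree 1 and interior vertices
are the vertices of degree ≥ 2; both sets are required to be nonempty.
The Dirichlet operator is the Laplacian restricted to functions vanishing on
the boundary; `dirichletLambda` is its smallest eigenvalue.
-/

open Finset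
open scoped Classical

noncomputable section

namespace FK

variable {V : Type*} [Fintype V] [DecidableEq V]

/-- A vertex is a boundary vertex iff it has degree `1`. -/
def IsBoundary (G : SimpleGraph V) (v : V) : Prop := G.degree v = 1

/-- A vertex is an interior vertex iff it has degree at least `2`. -/
def IsInterior (G : SimpleGraph V) (v : V) : Prop := 2 ≤ G.degree v

/-- A tree with boundary: a tree with at least one interior and
one boundary vertex. -/
def IsTreeWithBoundary (G : SimpleGraph V) : Prop :=
  G.IsTree ∧ (∃ v, IsInterior G v) ∧ (∃ v, IsBoundary G v)

/-- A connected graph with boundary: every vertex is either a boundary vertex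
(degree 1) or an interior vertex (degree ≥ 2), both kinds occur, and no edge
joins two boundary vertices. -/
def IsGraphWithBoundary (G : SimpleGraph V) : Prop :=
  G.Connected ∧ (∀ v, IsBoundary G v ∨ IsInterior G v) ∧
    (∃ v, IsInterior G v) ∧ (∃ v, IsBoundary G v) ∧
    (∀ v w, G.Adj v w → IsBoundary G v → ¬ IsBoundary G w)

/-- The finset of interior vertices. -/
def interiorFinset (G : SimpleGraph V) : Finset V := univ.filter (fun v => IsInterior G v)

/-- The finset of boundary vertices. -/
def boundaryFinset (G : SimpleGraph V) : Finset V := univ.filter (fun v => IsBoundary G v)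

/-- The degree sequence of `G`, as a multiset. -/
def degreeMultiset (G : SimpleGraph V) : Multiset ℕ := Finset.univ.val.map (fun v => G.degree v)

/-- The graph Laplacian `Δ = D - A` applied to a function `f : V → ℝ`. -/
def lapApply (G : SimpleGraph V) (f : V → ℝ) (v : V) : ℝ :=
  (G.degree v : ℝ) * f v - ∑ w ∈ G.neighborFinset v, f w

/-- `f` (vanishing on the boundary, nonzero) is an eigenfunction of the
Dirichlet operator `Δ₀` with eigenvalue `μ`: the eigenvalue equation holds at
every interior vertex. -/
def IsDirichletEigenpair (G : SimpleGraph V) (μ : ℝ) (f : V → ℝ) : Prop :=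
  f ≠ 0 ∧ (∀ v, IsBoundary G v → f v = 0) ∧
    ∀ v, IsInterior G v → lapApply G f v = μ * f v

/-- The first (smallest) Dirichlet eigenvalue `λ(G)`. -/
def dirichletLambda (G : SimpleGraph V) : ℝ :=
  sInf {μ : ℝ | ∃ f : V → ℝ, IsDirichletEigenpair G μ f}

/-- The quadratic form `⟨Δ f, f⟩ = Σ_{(u,v)∈E} (f u - f v)²` of the Laplacian
(each edge counted once). -/
def quadForm (G : SimpleGraph V) (f : V → ℝ) : ℝ :=
  (∑ v, ∑ w ∈ G.neighborFinset v, (f v - f w) ^ 2) / 2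

/-- The Rayleigh quotient `R_G(f)`. -/
def rayleigh (G : SimpleGraph V) (f : V → ℝ) : ℝ :=
  quadForm G f / ∑ v, f v ^ 2

/-- `w` is a child of `v` in the tree `G` rooted at `v₀`
(heights are distances from the root `v₀`). -/
def IsChild (G : SimpleGraph V) (v₀ v w : V) : Prop :=
  G.Adj v w ∧ G.dist v₀ w = G.dist v₀ v + 1

/-- A spiral-like ordering (SLO-ordering) of the vertices of the tree `G`
rooted at `v₀`: a (strict) well-ordering `lt` satisfying (S1)-(S3). -/
def IsSLOOrdering (G : SimpleGraph V) (v₀ : V) (lt : V → V → Prop) : Prop :=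
  IsStrictTotalOrder V lt ∧
  (∀ v w, lt v w → G.dist v₀ v ≤ G.dist v₀ w) ∧
  (∀ v₁ v₂ w₁ w₂, lt v₁ v₂ → IsChild G v₀ v₁ w₁ → IsChild G v₀ v₂ w₂ → lt w₁ w₂) ∧
  (∀ v w, lt v w → IsBoundary G v → IsBoundary G w)

/-- A spiral-like ordering with increasing degrees (SLO*-ordering):
additionally (S4). -/
def IsSLOStarOrdering (G : SimpleGraph V) (v₀ : V) (lt : V → V → Prop) : Prop :=
  IsSLOOrdering G v₀ lt ∧
  ∀ v w, lt v w → IsInterior G v → IsInterior G w → G.degree v ≤ G.degree w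

/-- An SLO-tree: a tree with boundary admitting an SLO-ordering. -/
def IsSLOTree (G : SimpleGraph V) : Prop :=
  IsTreeWithBoundary G ∧ ∃ (v₀ : V) (lt : V → V → Prop), IsSLOOrdering G v₀ lt

/-- An SLO*-tree: a tree with boundary admitting an SLO*-ordering. -/
def IsSLOStarTree (G : SimpleGraph V) : Prop :=
  IsTreeWithBoundary G ∧ ∃ (v₀ : V) (lt : V → V → Prop), IsSLOStarOrdering G v₀ lt

end FK

namespace FK

/-- Membership in the class `T_d^(n,k)`: trees with boundary with `n` vertices,
`k` interior vertices, every interior vertex of degree at least `d`. -/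
def inClassTd (k d : ℕ) {n : ℕ} (G : SimpleGraph (Fin n)) : Prop :=
  IsTreeWithBoundary G ∧ (interiorFinset G).card = k ∧
    ∀ v, IsInterior G v → d ≤ G.degree v

/-- The Faber-Krahn property in `T_d^(n,k)`. -/
def hasFKTd (k d : ℕ) {n : ℕ} (G : SimpleGraph (Fin n)) : Prop :=
  inClassTd k d G ∧ ∀ G' : SimpleGraph (Fin n), inClassTd k d G' →
    dirichletLambda G ≤ dirichletLambda G'


/-! ### The Rayleigh principle -/

/-- The quadratic form of a real matrix. -/
def qf {n : ℕ} (M : Fin n → Fin n → ℝ) (f : Fin n → ℝ) : ℝ := ∑ i, ∑ j, M i j * f i * f j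

/-- The Laplacian matrix `D - A` of `G`. -/
def lapM {n : ℕ} (G : SimpleGraph (Fin n)) (i j : Fin n) : ℝ :=
  (if i = j then (G.degree i : ℝ) else 0) - (if G.Adj i j then 1 else 0)

lemma lapM_symm {n : ℕ} (G : SimpleGraph (Fin n)) (i j : Fin n) : lapM G i j = lapM G j i := by
  unfold lapM
  by_cases h : i = j
  · subst h; rfl
  · simp [h, Ne.symm h, G.adj_comm]

lemma lapApply_eq {n : ℕ} (G : SimpleGraph (Fin n)) (f : Fin n → ℝ) (v : Fin n) :
    lapApply G f v = ∑ j, lapM G v j * f j := by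
  unfold lapApply lapM
  simp only [sub_mul, Finset.sum_sub_distrib, ite_mul, zero_mul, one_mul, Finset.sum_ite_eq,
    Finset.mem_univ, if_true]
  congr 1
  rw [← Finset.sum_filter]
  apply Finset.sum_congr _ (fun _ _ => rfl)
  ext w; simp

lemma qf_smul {n : ℕ} (M : Fin n → Fin n → ℝ) (c : ℝ) (f : Fin n → ℝ) :
    qf M (fun i => c * f i) = c ^ 2 * qf M f := by
  simp only [qf, Finset.mul_sum]
  refine Finset.sum_congr rfl fun i _ => Finset.sum_congr rfl fun j _ => by ring

lemma qf_eq {n : ℕ} (M : Fin n → Fin n → ℝ) (f : Fin n → ℝ) :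
    qf M f = ∑ i, f i * ∑ j, M i j * f j := by
  simp only [qf, Finset.mul_sum]
  refine Finset.sum_congr rfl fun i _ => Finset.sum_congr rfl fun j _ => by ring

lemma qf_add {n : ℕ} (M : Fin n → Fin n → ℝ) (hM : ∀ i j, M i j = M j i) (f : Fin n → ℝ)
    (v : Fin n) (t : ℝ) :
    qf M (fun i => f i + t * (if i = v then 1 else 0)) =
      qf M f + 2 * t * (∑ j, M v j * f j) + t ^ 2 * M v v := by
  have h1 : ∀ i j, M i j * (f i + t * (if i = v then 1 else 0)) *
      (f j + t * (if j = v then 1 else 0)) =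
      M i j * f i * f j + t * (if i = v then M i j * f j else 0)
        + t * (if j = v then M i j * f i else 0)
        + t ^ 2 * (if i = v then (if j = v then M i j else 0) else 0) := by
    intro i j; split_ifs <;> ring
  have h2 : ∑ i, M i v * f i = ∑ j, M v j * f j :=
    Finset.sum_congr rfl fun i _ => by rw [hM]
  have h3 : ∑ i, ∑ j, (if i = v then M i j * f j else 0) = ∑ j, M v j * f j := by
    rw [Finset.sum_comm]; simp
  have h4 : ∑ i, ∑ j, (if i = v then (if j = v then M i j else 0) else 0) = M v v := by
    rw [Finset.sum_comm]; simp
  simp only [qf, h1, Finset.sum_add_distrib, ← Finset.mul_sum, h3, h4]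
  simp only [Finset.sum_ite_eq', Finset.mem_univ, if_true, h2]
  ring

lemma sq_add_single {n : ℕ} (f : Fin n → ℝ) (v : Fin n) (t : ℝ) :
    ∑ i, (f i + t * (if i = v then 1 else 0)) ^ 2 = ∑ i, f i ^ 2 + 2 * t * f v + t ^ 2 := by
  have h1 : ∀ i, (f i + t * (if i = v then 1 else 0)) ^ 2 =
      f i ^ 2 + (if i = v then 2 * t * f i + t ^ 2 else 0) := by
    intro i; split_ifs <;> ring
  simp only [h1, Finset.sum_add_distrib, Finset.sum_ite_eq', Finset.mem_univ, if_true]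
  ring

lemma sumsq_pos {n : ℕ} {f : Fin n → ℝ} (hf : f ≠ 0) : 0 < ∑ i, f i ^ 2 := by
  obtain ⟨v, hv⟩ := Function.ne_iff.mp hf
  exact Finset.sum_pos' (fun i _ => sq_nonneg _) ⟨v, Finset.mem_univ _, by
    have : f v ≠ 0 := hv
    positivity⟩

/-- A symmetric form attains its minimal Rayleigh quotient among the nonzero functions supported
in a nonempty set. -/
lemma exists_min {n : ℕ} (M : Fin n → Fin n → ℝ) (I : Fin n → Prop) (hI : ∃ v, I v) :
    ∃ (μ : ℝ) (f : Fin n → ℝ), f ≠ 0 ∧ (∀ v, ¬ I v → f v = 0) ∧ qf M f = μ * ∑ i, f i ^ 2 ∧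
      ∀ g : Fin n → ℝ, (∀ v, ¬ I v → g v = 0) → μ * ∑ i, g i ^ 2 ≤ qf M g := by
  obtain ⟨v₀, hv₀⟩ := hI
  set S : Set (Fin n → ℝ) := {f | (∀ v, ¬ I v → f v = 0) ∧ ∑ i, f i ^ 2 = 1} with hS
  have hcl : IsClosed S := by
    have : S = (⋂ v, ⋂ (_ : ¬ I v), {f : Fin n → ℝ | f v = 0}) ∩ {f | ∑ i, f i ^ 2 = 1} := by
      ext f; simp [hS]
    rw [this]
    refine IsClosed.inter (isClosed_iInter fun v => isClosed_iInter fun _ => ?_) ?_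
    · exact isClosed_eq (continuous_apply v) continuous_const
    · exact isClosed_eq (by fun_prop) continuous_const
  have hcomp : IsCompact S := by
    refine (isCompact_univ_pi (fun _ : Fin n => isCompact_Icc (a := (-1 : ℝ)) (b := 1))).of_isClosed_subset
      hcl ?_
    intro f hf i _
    have h1 : f i ^ 2 ≤ 1 := by
      rw [← hf.2]
      exact Finset.single_le_sum (f := fun i => f i ^ 2) (fun i _ => sq_nonneg _) (Finset.mem_univ i)
    exact abs_le.mp ((sq_le_one_iff_abs_le_one _).mp h1)
  have hne : S.Nonempty := by
    refine ⟨fun i => if i = v₀ then 1 else 0, ?_, ?_⟩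
    · intro v hv
      have : v ≠ v₀ := fun h => hv (h ▸ hv₀)
      simp [this]
    · simp
  have hcont : Continuous (qf M) := by unfold qf; fun_prop
  obtain ⟨f, hfS, hfmin⟩ := hcomp.exists_isMinOn hne hcont.continuousOn
  refine ⟨qf M f, f, ?_, hfS.1, by rw [hfS.2, mul_one], ?_⟩
  · rintro rfl
    have := hfS.2
    simp at this
  · intro g hg
    by_cases hg0 : g = 0
    · subst hg0; simp [qf]
    have hpos := sumsq_pos hg0
    set s := ∑ i, g i ^ 2 with hs
    have hmem : (fun i => (Real.sqrt s)⁻¹ * g i) ∈ S := by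
      refine ⟨fun v hv => by simp [hg v hv], ?_⟩
      simp only [mul_pow, ← Finset.mul_sum, inv_pow, Real.sq_sqrt hpos.le, ← hs]
      exact inv_mul_cancel₀ hpos.ne'
    have := hfmin hmem
    simp only [Set.mem_ofPred_eq, qf_smul, inv_pow, Real.sq_sqrt hpos.le] at this
    rwa [inv_mul_eq_div, le_div_iff₀ hpos] at this

/-- A minimiser of the Rayleigh quotient satisfies the eigenvalue equation. -/
lemma min_eigen {n : ℕ} (M : Fin n → Fin n → ℝ) (hM : ∀ i j, M i j = M j i) (I : Fin n → Prop)
    (μ : ℝ) (hμ : ∀ g : Fin n → ℝ, (∀ v, ¬ I v → g v = 0) → μ * ∑ i, g i ^ 2 ≤ qf M g)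
    (f : Fin n → ℝ) (hf : ∀ v, ¬ I v → f v = 0) (hfe : qf M f = μ * ∑ i, f i ^ 2)
    (v : Fin n) (hv : I v) : ∑ j, M v j * f j = μ * f v := by
  set c := ∑ j, M v j * f j - μ * f v with hc
  have key : ∀ t : ℝ, 0 ≤ 2 * t * c + t ^ 2 * (M v v - μ) := by
    intro t
    have := hμ (fun i => f i + t * (if i = v then 1 else 0)) (by
      intro w hw
      have : w ≠ v := fun h => hw (h ▸ hv)
      simp [this, hf w hw])
    rw [qf_add M hM, sq_add_single, hfe] at this
    rw [hc]; nlinarith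
  have hc0 : c = 0 := by
    -- a quadratic polynomial without constant term which is nonnegative has no linear term
    set e := M v v - μ
    have h1 := key (-c / (|e| + 1))
    have hp : 0 < |e| + 1 := by positivity
    have h2 : 2 * (-c / (|e| + 1)) * c + (-c / (|e| + 1)) ^ 2 * e
        = (c ^ 2 / (|e| + 1) ^ 2) * (e - 2 * (|e| + 1)) := by field_simp; ring
    rw [h2] at h1
    have h3 : e - 2 * (|e| + 1) < 0 := by have := le_abs_self e; have := abs_nonneg e; linarith
    by_contra hne
    have h4 : 0 < c ^ 2 / (|e| + 1) ^ 2 := by positivity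
    nlinarith
  linarith

lemma isInterior_of_not_boundary {n : ℕ} {G : SimpleGraph (Fin n)} (hG : IsTreeWithBoundary G)
    (v : Fin n) : ¬ IsBoundary G v ↔ IsInterior G v := by
  unfold IsBoundary IsInterior
  have h1 : 0 < G.degree v := by
    have : Nontrivial (Fin n) := by
      obtain ⟨w, hw⟩ := hG.2.1
      obtain ⟨u, hu⟩ := (G.degree_pos_iff_exists_adj w).mp (by unfold IsInterior at hw; omega)
      exact ⟨w, u, hu.ne⟩
    exact hG.1.1.preconnected.degree_pos_of_nontrivial v
  omega

/-- Rayleigh principle: `λ(G)` is the minimum of the Rayleigh quotient, and it is attained by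
a function which is positive on the interior. -/
lemma lambda_spec {n : ℕ} {G : SimpleGraph (Fin n)} (hG : IsTreeWithBoundary G) :
    (∀ g : Fin n → ℝ, (∀ v, ¬ IsInterior G v → g v = 0) →
      dirichletLambda G * ∑ i, g i ^ 2 ≤ qf (lapM G) g) ∧
    ∃ f : Fin n → ℝ, (∀ v, ¬ IsInterior G v → f v = 0) ∧ (∀ v, IsInterior G v → 0 < f v) ∧
      qf (lapM G) f = dirichletLambda G * ∑ i, f i ^ 2 := by
  obtain ⟨μ, f, hf0, hfI, hfe, hmin⟩ := exists_min (lapM G) (IsInterior G) hG.2.1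
  have hbd : ∀ v, IsBoundary G v ↔ ¬ IsInterior G v := fun v => by
    rw [← isInterior_of_not_boundary hG, not_not]
  have heig : ∀ g : Fin n → ℝ, (∀ v, ¬ IsInterior G v → g v = 0) →
      qf (lapM G) g = μ * ∑ i, g i ^ 2 → ∀ v, IsInterior G v → lapApply G g v = μ * g v := by
    intro g hg hge v hv
    rw [lapApply_eq]
    exact min_eigen (lapM G) (lapM_symm G) (IsInterior G) μ hmin g hg hge v hv
  have hlam : dirichletLambda G = μ := by
    apply IsLeast.csInf_eq
    refine ⟨⟨f, hf0, fun v hv => hfI v ((hbd v).mp hv), heig f hfI hfe⟩, ?_⟩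
    rintro μ' ⟨h, hh0, hhb, hhe⟩
    have hhI : ∀ v, ¬ IsInterior G v → h v = 0 := fun v hv => hhb v ((hbd v).mpr hv)
    have h1 : qf (lapM G) h = μ' * ∑ i, h i ^ 2 := by
      rw [qf_eq, Finset.mul_sum]
      refine Finset.sum_congr rfl fun i _ => ?_
      by_cases hi : IsInterior G i
      · rw [← lapApply_eq, hhe i hi]; ring
      · rw [hhI i hi]; ring
    have h2 := hmin h hhI
    rw [h1] at h2
    exact le_of_mul_le_mul_right h2 (sumsq_pos hh0)
  rw [hlam]
  refine ⟨hmin, fun i => |f i|, fun v hv => by simp [hfI v hv], ?_, ?_⟩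
  all_goals
    have habsI : ∀ v, ¬ IsInterior G v → (fun i => |f i|) v = 0 := fun v hv => by simp [hfI v hv]
    have habs : qf (lapM G) (fun i => |f i|) = μ * ∑ i, |f i| ^ 2 := by
      apply le_antisymm _ (hmin _ habsI)
      simp only [sq_abs, ← hfe]
      unfold qf
      refine Finset.sum_le_sum fun i _ => Finset.sum_le_sum fun j _ => ?_
      unfold lapM
      by_cases hij : i = j
      · subst hij
        simp only [if_true, SimpleGraph.irrefl, if_false, sub_zero, mul_assoc, abs_mul_abs_self]
        exact le_rfl
      · have := le_abs_self (f i * f j)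
        rw [abs_mul] at this
        simp only [if_neg hij]
        split_ifs <;> nlinarith
  · intro v hv
    rcases (abs_nonneg (f v)).lt_or_eq with h | h
    · exact h
    exfalso
    -- a zero at an interior vertex spreads over the whole connected graph
    have hE := heig _ habsI habs
    have hinter : ∀ u, IsInterior G u → f u = 0 → ∀ w, G.Adj u w → f w = 0 := by
      intro u hu hfu w huw
      have h1 := hE u hu
      simp only [lapApply, hfu, abs_zero, mul_zero, zero_sub, neg_eq_zero] at h1
      have h2 := (Finset.sum_eq_zero_iff_of_nonneg (fun i _ => abs_nonneg (f i))).mp h1 w (by simpa using huw)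
      simpa using h2
    have hwalk : ∀ u w : Fin n, G.Walk u w → (f u = 0 ∧ ∀ x, G.Adj u x → f x = 0) →
        (f w = 0 ∧ ∀ x, G.Adj w x → f x = 0) := by
      intro u w p
      induction p with
      | nil => exact id
      | @cons a b c hab p ih =>
        rintro ⟨ha, ha'⟩
        apply ih
        refine ⟨ha' b hab, fun x hbx => ?_⟩
        by_cases hb : IsInterior G b
        · exact hinter b hb (ha' b hab) x hbx
        · have hb1 : G.degree b = 1 := (hbd b).mpr hb
          rw [← SimpleGraph.card_neighborFinset_eq_degree, Finset.card_eq_one] at hb1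
          obtain ⟨y, hy⟩ := hb1
          have e1 : a ∈ G.neighborFinset b := by simpa using hab.symm
          have e2 : x ∈ G.neighborFinset b := by simpa using hbx
          rw [hy, Finset.mem_singleton] at e1 e2
          rw [e2, ← e1]; exact ha
    apply hf0
    funext w
    have hfv : f v = 0 := by simpa using h.symm
    obtain ⟨p⟩ := hG.1.1.preconnected v w
    exact (hwalk v w p ⟨hfv, hinter v hv hfv⟩).1
  · exact habs

/-! ### Counting edges between initial segments -/

/-- The number of pairs `(i, j) ∈ A × B` of adjacent vertices. -/
def pc {n : ℕ} (H : SimpleGraph (Fin n)) (A B : Finset (Fin n)) : ℕ :=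
  ∑ i ∈ A, ∑ j ∈ B, if H.Adj i j then 1 else 0

/-- The initial segment `{0, …, a - 1}` of `Fin n`. -/
def seg (n a : ℕ) : Finset (Fin n) := univ.filter fun i => i.val < a

/-- The number of adjacent pairs `(i, j)` with `i < a` and `j < b`. -/
def cnt {n : ℕ} (H : SimpleGraph (Fin n)) (a b : ℕ) : ℕ := pc H (seg n a) (seg n b)

/-- The degree sum of the first `a` vertices. -/
def dsum {n : ℕ} (H : SimpleGraph (Fin n)) (a : ℕ) : ℕ := ∑ i ∈ seg n a, H.degree i

lemma mem_seg {n a : ℕ} {i : Fin n} : i ∈ seg n a ↔ i.val < a := by simp [seg]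

lemma seg_univ (n : ℕ) : seg n n = univ := by ext i; simp [seg]

lemma card_seg {n a : ℕ} (h : a ≤ n) : (seg n a).card = a := by
  unfold seg
  rw [Fin.card_filter_val_lt]; omega

lemma seg_mono {n a b : ℕ} (h : a ≤ b) : seg n a ⊆ seg n b := by
  intro i; simp only [mem_seg]; omega

lemma pc_symm {n : ℕ} (H : SimpleGraph (Fin n)) (A B : Finset (Fin n)) : pc H A B = pc H B A := by
  unfold pc
  rw [Finset.sum_comm]
  simp only [H.adj_comm]

lemma pc_split_right {n : ℕ} (H : SimpleGraph (Fin n)) (A : Finset (Fin n)) {B C : Finset (Fin n)}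
    (h : B ⊆ C) : pc H A C = pc H A B + pc H A (C \ B) := by
  unfold pc
  rw [← Finset.sum_add_distrib]
  refine Finset.sum_congr rfl fun i _ => ?_
  rw [add_comm, Finset.sum_sdiff h]

lemma pc_split_left {n : ℕ} (H : SimpleGraph (Fin n)) (A : Finset (Fin n)) {B C : Finset (Fin n)}
    (h : B ⊆ C) : pc H C A = pc H B A + pc H (C \ B) A := by
  rw [pc_symm, pc_split_right H A h, pc_symm H A B, pc_symm H A]

lemma two_pc {n : ℕ} (H : SimpleGraph (Fin n)) {A B : Finset (Fin n)} (h : A ⊆ B) :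
    2 * pc H A B + pc H (B \ A) (B \ A) = pc H A A + pc H B B := by
  have h1 := pc_split_right H A h
  have h2 := pc_split_left H B h
  have h3 := pc_split_right H (B \ A) h
  have h4 := pc_symm H A (B \ A)
  omega

lemma degree_eq_sum {n : ℕ} (H : SimpleGraph (Fin n)) (i : Fin n) :
    H.degree i = ∑ j, if H.Adj i j then 1 else 0 := by
  rw [← SimpleGraph.card_neighborFinset_eq_degree, Finset.sum_boole]
  simp only [Nat.cast_id]
  congr 1
  ext j; simp

lemma pc_univ {n : ℕ} (H : SimpleGraph (Fin n)) (A : Finset (Fin n)) :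
    pc H A univ = ∑ i ∈ A, H.degree i :=
  Finset.sum_congr rfl fun i _ => (degree_eq_sum H i).symm

lemma cnt_full {n : ℕ} (H : SimpleGraph (Fin n)) (a : ℕ) : cnt H a n = dsum H a := by
  rw [cnt, seg_univ, pc_univ, dsum]

lemma pc_eq_zero {n : ℕ} {H : SimpleGraph (Fin n)} {A B : Finset (Fin n)} (h : pc H A B = 0)
    {i j : Fin n} (hi : i ∈ A) (hj : j ∈ B) : ¬ H.Adj i j := by
  intro hij
  have h1 := (Finset.sum_eq_zero_iff.mp h) i hi
  have h2 := (Finset.sum_eq_zero_iff.mp h1) j hj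
  simp [hij] at h2

/-- A forest on `#A` vertices has at most `#A - 1` edges. -/
lemma forest_bound {n : ℕ} {H : SimpleGraph (Fin n)} (hH : H.IsTree) {A : Finset (Fin n)}
    (hA : A.Nonempty) : pc H A A + 2 ≤ 2 * A.card := by
  set F := H.induce (A : Set (Fin n)) with hF
  have hac : F.IsAcyclic := hH.2.induce _
  have : Nonempty (A : Set (Fin n)) := hA.to_subtype
  obtain ⟨T, hFT, -, hT⟩ : ∃ T, F ≤ T ∧ T ≤ (⊤ : SimpleGraph (A : Set (Fin n))) ∧ T.IsTree := by
    obtain ⟨T, h⟩ := (SimpleGraph.connected_top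
      (V := (A : Set (Fin n)))).exists_isTree_le_of_le_of_isAcyclic le_top hac
    exact ⟨T, by tauto⟩
  have h1 := hT.card_edgeFinset
  have h2 : F.edgeFinset.card ≤ T.edgeFinset.card :=
    Finset.card_le_card (SimpleGraph.edgeFinset_mono hFT)
  have h3 := F.sum_degrees_eq_twice_card_edges
  have h4 : ∑ v, F.degree v = pc H A A := by
    unfold pc
    rw [← Finset.sum_coe_sort A]
    refine Finset.sum_congr rfl fun v _ => ?_
    rw [← Finset.sum_coe_sort A, ← SimpleGraph.card_neighborFinset_eq_degree, Finset.sum_boole]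
    simp only [Nat.cast_id]
    congr 1
    ext w
    simp [hF]
  have h5 : Fintype.card (A : Set (Fin n)) = A.card := by simp
  omega

lemma cnt_self_le {n : ℕ} {H : SimpleGraph (Fin n)} (hH : H.IsTree) {a : ℕ} (ha : 1 ≤ a)
    (han : a ≤ n) : cnt H a a + 2 ≤ 2 * a := by
  have := forest_bound hH (A := seg n a) ⟨⟨0, by omega⟩, mem_seg.mpr ha⟩
  rwa [card_seg han] at this

lemma cnt_le {n : ℕ} {H : SimpleGraph (Fin n)} (hH : H.IsTree) {a b : ℕ} (ha : 1 ≤ a)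
    (hab : a ≤ b) (hb : b ≤ n) : cnt H a b + 2 ≤ a + b := by
  have h1 := cnt_self_le hH ha (hab.trans hb)
  have h2 := cnt_self_le hH (ha.trans hab) hb
  have h3 := two_pc H (seg_mono (n := n) hab)
  unfold cnt at *
  omega

lemma cnt_le_dsum {n : ℕ} (H : SimpleGraph (Fin n)) {a b : ℕ} (hb : b ≤ n) :
    cnt H a b ≤ dsum H a := by
  rw [← cnt_full]
  have := pc_split_right H (seg n a) (seg_mono (n := n) hb)
  unfold cnt; omega

lemma dsum_full {n : ℕ} {H : SimpleGraph (Fin n)} (hH : H.IsTree) : dsum H n + 2 = 2 * n := by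
  have h1 := hH.card_edgeFinset
  have h3 := H.sum_degrees_eq_twice_card_edges
  rw [dsum, seg_univ]
  simp only [Fintype.card_fin] at h1
  omega

lemma dsum_succ {n : ℕ} (H : SimpleGraph (Fin n)) (i : Fin n) :
    dsum H (i.val + 1) = dsum H i.val + H.degree i := by
  have : seg n (i.val + 1) = insert i (seg n i.val) := by
    ext j
    simp only [mem_seg, Finset.mem_insert, Fin.ext_iff]; omega
  rw [dsum, this, Finset.sum_insert (by simp [mem_seg]), dsum, add_comm]

lemma exists_threshold (n : ℕ) (P : ℕ → Prop) (hP : ∀ i j, i ≤ j → j < n → P j → P i) :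
    ∃ T ≤ n, ∀ j < n, P j ↔ j < T := by
  induction n with
  | zero => exact ⟨0, le_rfl, fun j hj => absurd hj (by omega)⟩
  | succ n ih =>
    by_cases hn : P n
    · exact ⟨n + 1, le_rfl, fun j hj => ⟨fun _ => hj, fun _ => hP j n (by omega) (by omega) hn⟩⟩
    · obtain ⟨T, hT, h⟩ := ih fun i j hij hj => hP i j hij (by omega)
      refine ⟨T, by omega, fun j hj => ?_⟩
      by_cases hjn : j = n
      · subst hjn
        exact ⟨fun h' => absurd h' hn, fun h' => absurd h' (by omega)⟩
      · exact h j (by omega)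

/-! ### Spiral trees -/

/-- `H` is the tree on `{0, …, n - 1}` rooted at `0` in which the parent of `j > 0` is `p j < j`,
where `p` is monotone; that is, the natural order of `Fin n` enumerates `H` breadth first. -/
structure Spiral {n : ℕ} (H : SimpleGraph (Fin n)) (p : ℕ → ℕ) : Prop where
  lt : ∀ j, 0 < j → j < n → p j < j
  mono : ∀ i j, 0 < i → i ≤ j → j < n → p i ≤ p j
  adj : ∀ i j : Fin n, H.Adj i j ↔ (0 < j.val ∧ p j = i.val) ∨ (0 < i.val ∧ p i = j.val)

lemma sum_seg_ite {n a : ℕ} (x : ℕ) (hx : x < n) :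
    (∑ i ∈ seg n a, if x = i.val then 1 else 0) = if x < a then 1 else 0 := by
  rw [Finset.sum_boole]
  simp only [Nat.cast_id]
  split_ifs with h
  · rw [Finset.card_eq_one]
    refine ⟨⟨x, hx⟩, ?_⟩
    ext i; simp only [Finset.mem_filter, mem_seg, Finset.mem_singleton, Fin.ext_iff]; omega
  · rw [Finset.card_eq_zero]
    ext i; simp only [Finset.mem_filter, mem_seg, Finset.notMem_empty, iff_false]; omega

/-- The children of the first `a` vertices form, with the root, the initial segment of some length
`T`, which determines all edge counts. -/
lemma Spiral.thr {n : ℕ} {H : SimpleGraph (Fin n)} {p : ℕ → ℕ} (hs : Spiral H p) {a : ℕ}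
    (ha : 1 ≤ a) (han : a ≤ n) :
    ∃ T, 1 ≤ T ∧ T ≤ n ∧ (∀ j, 0 < j → j < n → (p j < a ↔ j < T)) ∧
      ∀ b, a ≤ b → b ≤ n → cnt H a b + 2 = min b T + a := by
  obtain ⟨T, hTn, hT⟩ := exists_threshold n (fun j => j = 0 ∨ p j < a) (by
    intro i j hij hj h
    by_cases hi : i = 0
    · exact Or.inl hi
    · have := hs.mono i j (by omega) hij hj
      right; omega)
  have hT1 : 1 ≤ T := (hT 0 (by omega)).mp (Or.inl rfl)
  have hTj : ∀ j, 0 < j → j < n → (p j < a ↔ j < T) := fun j hj hjn => by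
    rw [← hT j hjn]; omega
  refine ⟨T, hT1, hTn, hTj, fun b hab hbn => ?_⟩
  have hind : ∀ i j : Fin n, (if H.Adj i j then 1 else 0) =
      (if 0 < j.val then (if p j = i.val then 1 else 0) else 0) +
      (if 0 < i.val then (if p i = j.val then 1 else 0) else 0) := by
    intro i j
    have h1 := hs.adj i j
    have h2 := hs.lt i.val
    have h3 := hs.lt j.val
    have hi := i.isLt
    have hj := j.isLt
    split_ifs <;> first | rfl | (exfalso; omega) | (exfalso; simp_all)
  have e1 : ∑ i ∈ seg n a, ∑ j ∈ seg n b,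
      (if 0 < j.val then (if p j = i.val then 1 else 0) else 0) = min b T - 1 := by
    rw [Finset.sum_comm]
    have : ∀ j ∈ seg n b, (∑ i ∈ seg n a, (if 0 < j.val then (if p j = i.val then 1 else 0) else 0))
        = if 0 < j.val ∧ j.val < T then 1 else 0 := by
      intro j _
      by_cases hj : 0 < j.val
      · have h4 := hTj j.val hj j.isLt
        simp only [hj, true_and, if_true]
        rw [sum_seg_ite _ ((hs.lt j hj j.isLt).trans j.isLt)]
        simp only [h4]
      · simp [hj]
    rw [Finset.sum_congr rfl this, Finset.sum_boole]
    simp only [Nat.cast_id]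
    have h5 : (seg n b).filter (fun j => 0 < j.val ∧ j.val < T) = seg n (min b T) \ seg n 1 := by
      ext j; simp only [Finset.mem_filter, mem_seg, Finset.mem_sdiff]; omega
    rw [h5, Finset.card_sdiff_of_subset (seg_mono (by omega)), card_seg (by omega), card_seg (by omega)]
  have e2 : ∑ i ∈ seg n a, ∑ j ∈ seg n b,
      (if 0 < i.val then (if p i = j.val then 1 else 0) else 0) = a - 1 := by
    have : ∀ i ∈ seg n a, (∑ j ∈ seg n b, (if 0 < i.val then (if p i = j.val then 1 else 0) else 0))
        = if 0 < i.val then 1 else 0 := by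
      intro i hi
      rw [mem_seg] at hi
      by_cases hj : 0 < i.val
      · have h4 := hs.lt i hj i.isLt
        simp only [if_pos hj]
        rw [sum_seg_ite _ (h4.trans i.isLt), if_pos (by omega)]
      · simp [hj]
    rw [Finset.sum_congr rfl this, Finset.sum_boole]
    simp only [Nat.cast_id]
    have h5 : (seg n a).filter (fun j => 0 < j.val) = seg n a \ seg n 1 := by
      ext j; simp only [Finset.mem_filter, mem_seg, Finset.mem_sdiff]; omega
    rw [h5, Finset.card_sdiff_of_subset (seg_mono (by omega)), card_seg (by omega), card_seg (by omega)]
  unfold cnt pc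
  simp only [hind, Finset.sum_add_distrib]
  rw [e1, e2]
  omega

lemma Spiral.cnt_eq {n : ℕ} {H : SimpleGraph (Fin n)} {p : ℕ → ℕ} (hs : Spiral H p) {a b : ℕ}
    (ha : 1 ≤ a) (hab : a ≤ b) (hb : b ≤ n) : cnt H a b + 2 = min (dsum H a + 2) (a + b) := by
  obtain ⟨T, hT1, hTn, -, h⟩ := hs.thr ha (hab.trans hb)
  have h1 := h b hab hb
  have h2 := h n (hab.trans hb) le_rfl
  rw [cnt_full] at h2
  omega

/-- A spiral tree is determined by its sequence of degrees. -/
lemma Spiral.unique {n : ℕ} {H H' : SimpleGraph (Fin n)} {p p' : ℕ → ℕ} (hs : Spiral H p)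
    (hs' : Spiral H' p') (hd : ∀ i, H.degree i = H'.degree i) : H = H' := by
  have hD : ∀ a, dsum H a = dsum H' a := fun a => Finset.sum_congr rfl fun i _ => hd i
  have hp : ∀ j, 0 < j → j < n → ∀ a, 1 ≤ a → a ≤ n → (p j < a ↔ p' j < a) := by
    intro j hj hjn a ha han
    obtain ⟨T, hT1, hTn, h, hc⟩ := hs.thr ha han
    obtain ⟨T', hT1', hTn', h', hc'⟩ := hs'.thr ha han
    have h1 := hc n han le_rfl
    have h2 := hc' n han le_rfl
    rw [cnt_full] at h1 h2
    have := hD a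
    rw [h j hj hjn, h' j hj hjn]
    omega
  have hpp : ∀ j, 0 < j → j < n → p j = p' j := by
    intro j hj hjn
    have h1 := hs.lt j hj hjn
    have h2 := hs'.lt j hj hjn
    have h3 := hp j hj hjn (p j + 1) (by omega) (by omega)
    have h4 := hp j hj hjn (p' j + 1) (by omega) (by omega)
    omega
  ext i j
  rw [hs.adj, hs'.adj]
  have h1 := hpp i.val
  have h2 := hpp j.val
  have := i.isLt
  have := j.isLt
  constructor <;> (rintro (⟨h3, h4⟩ | ⟨h3, h4⟩) <;> [left; right] <;> exact ⟨h3, by omega⟩)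

/-- The depth of `j` in the rooted tree with parent function `p`. -/
def depth (p : ℕ → ℕ) : ℕ → ℕ
  | 0 => 0
  | j + 1 => if _h : p (j + 1) < j + 1 then depth p (p (j + 1)) + 1 else 0
termination_by j => j

lemma Spiral.depth_eq {n : ℕ} {H : SimpleGraph (Fin n)} {p : ℕ → ℕ} (hs : Spiral H p) {j : ℕ}
    (hj : 0 < j) (hjn : j < n) : depth p j = depth p (p j) + 1 := by
  obtain ⟨i, rfl⟩ : ∃ i, j = i + 1 := ⟨j - 1, by omega⟩
  rw [depth, dif_pos (hs.lt _ hj hjn)]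

lemma Spiral.depth_mono {n : ℕ} {H : SimpleGraph (Fin n)} {p : ℕ → ℕ} (hs : Spiral H p) :
    ∀ j < n, ∀ i ≤ j, depth p i ≤ depth p j := by
  intro j
  induction j using Nat.strong_induction_on with
  | _ j ih =>
    intro hjn i hij
    by_cases hi : i = 0
    · subst hi; simp [depth]
    · have h1 := hs.lt j (by omega) hjn
      rw [hs.depth_eq (by omega) (by omega), hs.depth_eq (by omega) hjn]
      have := ih (p j) h1 (by omega) (p i) (hs.mono i j (by omega) hij hjn)
      omega

lemma Spiral.exists_walk {n : ℕ} {H : SimpleGraph (Fin n)} {p : ℕ → ℕ} (hs : Spiral H p)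
    (hn : 0 < n) : ∀ (j : ℕ) (hj : j < n), ∃ w : H.Walk ⟨0, hn⟩ ⟨j, hj⟩, w.length = depth p j := by
  intro j
  induction j using Nat.strong_induction_on with
  | _ j ih =>
    intro hjn
    by_cases hj : j = 0
    · subst hj; exact ⟨.nil, by simp [depth]⟩
    · have h1 := hs.lt j (by omega) hjn
      obtain ⟨w, hw⟩ := ih (p j) h1 (by omega)
      have hadj : H.Adj ⟨p j, by omega⟩ ⟨j, hjn⟩ := (hs.adj _ _).mpr (Or.inl ⟨by simp; omega, rfl⟩)
      exact ⟨w.concat hadj, by rw [SimpleGraph.Walk.length_concat, hw, hs.depth_eq (by omega) hjn]⟩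

lemma Spiral.connected {n : ℕ} {H : SimpleGraph (Fin n)} {p : ℕ → ℕ} (hs : Spiral H p)
    (hn : 0 < n) : H.Connected := by
  have : Nonempty (Fin n) := ⟨⟨0, hn⟩⟩
  refine ⟨fun u v => ?_⟩
  obtain ⟨w, -⟩ := hs.exists_walk hn u.val u.isLt
  obtain ⟨w', -⟩ := hs.exists_walk hn v.val v.isLt
  exact ⟨w.reverse.append w'⟩

lemma Spiral.dist_eq {n : ℕ} {H : SimpleGraph (Fin n)} {p : ℕ → ℕ} (hs : Spiral H p)
    (hn : 0 < n) (j : Fin n) : H.dist ⟨0, hn⟩ j = depth p j := by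
  obtain ⟨w, hw⟩ := hs.exists_walk hn j.val j.isLt
  apply le_antisymm (hw ▸ SimpleGraph.dist_le w)
  have key : ∀ u v : Fin n, ∀ w : H.Walk u v, depth p v ≤ depth p u + w.length := by
    intro u v w
    induction w with
    | nil => simp
    | @cons a b c hab w ih =>
      rw [SimpleGraph.Walk.length_cons]
      have : depth p b ≤ depth p a + 1 := by
        rcases (hs.adj a b).mp hab with ⟨h1, h2⟩ | ⟨h1, h2⟩
        · rw [hs.depth_eq h1 b.isLt, h2]
        · rw [hs.depth_eq h1 a.isLt, h2]; omega
      omega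
  obtain ⟨w', hw'⟩ := (hs.connected hn).exists_walk_length_eq_dist ⟨0, hn⟩ j
  have := key _ _ w'
  rw [hw'] at this
  simpa [depth] using this

lemma Spiral.isTree {n : ℕ} {H : SimpleGraph (Fin n)} {p : ℕ → ℕ} (hs : Spiral H p)
    (hn : 0 < n) : H.IsTree := by
  rw [SimpleGraph.isTree_iff_connected_and_card]
  refine ⟨hs.connected hn, ?_⟩
  obtain ⟨T, hT1, hTn, h, hc⟩ := hs.thr (a := n) hn le_rfl
  have h1 := hc n le_rfl le_rfl
  have hT : T = n := by
    by_contra hne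
    have := (h T (by omega) (by omega)).mp ((hs.lt T (by omega) (by omega)).trans (by omega))
    omega
  rw [cnt_full, dsum, seg_univ, H.sum_degrees_eq_twice_card_edges] at h1
  rw [Nat.card_eq_fintype_card, Nat.card_eq_fintype_card, Fintype.card_fin,
    ← SimpleGraph.edgeFinset_card]
  omega

lemma Spiral.isSLOStar {n : ℕ} {H : SimpleGraph (Fin n)} {p : ℕ → ℕ} (hs : Spiral H p)
    (hn : 0 < n) (hb : ∀ i j : Fin n, i < j → IsBoundary H i → IsBoundary H j)
    (hd : ∀ i j : Fin n, i < j → IsInterior H i → IsInterior H j → H.degree i ≤ H.degree j) :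
    IsSLOStarOrdering H ⟨0, hn⟩ (· < ·) := by
  have hchild : ∀ v w : Fin n, IsChild H ⟨0, hn⟩ v w → 0 < w.val ∧ p w = v.val := by
    rintro v w ⟨hadj, hdist⟩
    rw [hs.dist_eq, hs.dist_eq] at hdist
    rcases (hs.adj v w).mp hadj with h | ⟨h1, h2⟩
    · exact h
    · rw [hs.depth_eq h1 v.isLt, h2] at hdist; omega
  refine ⟨⟨inferInstance, ?_, ?_, hb⟩, hd⟩
  · intro v w hvw
    rw [hs.dist_eq, hs.dist_eq]
    exact hs.depth_mono w.val w.isLt v.val (le_of_lt hvw)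
  · intro v₁ v₂ w₁ w₂ hlt h1 h2
    by_contra hle
    rw [not_lt] at hle
    obtain ⟨h3, h4⟩ := hchild _ _ h1
    obtain ⟨h5, h6⟩ := hchild _ _ h2
    have := hs.mono w₂.val w₁.val h5 hle w₁.isLt
    rw [h4, h6] at this
    exact absurd hlt (not_lt.mpr this)

/-! ### The extremal tree -/

/-- The parent function of the extremal tree: the root has children `1, …, d`, each further
interior vertex takes the next `d - 1` vertices as children, and the last interior vertex `k - 1`
takes all that remain. -/
def par (k d j : ℕ) : ℕ := min ((j - 2) / (d - 1)) (k - 1)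

lemma par_lt (k d j : ℕ) (hj : 0 < j) : par k d j < j := by
  unfold par
  have := Nat.div_le_self (j - 2) (d - 1)
  omega

/-- The extremal tree: the spiral tree with interior degrees `d, …, d, d°`. -/
def optTree (n k d : ℕ) : SimpleGraph (Fin n) where
  Adj i j := (0 < j.val ∧ par k d j = i.val) ∨ (0 < i.val ∧ par k d i = j.val)
  symm := ⟨fun _ _ h => h.symm⟩
  loopless := ⟨fun i h => by
    have := par_lt k d i.val
    omega⟩

lemma opt_spiral (n k d : ℕ) : Spiral (optTree n k d) (par k d) where
  lt j hj _ := par_lt k d j hj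
  mono i j _ hij _ := by
    unfold par
    have : (i - 2) / (d - 1) ≤ (j - 2) / (d - 1) := Nat.div_le_div_right (by omega)
    omega
  adj i j := Iff.rfl

lemma par_lt_iff {k d a j : ℕ} (hd : 2 ≤ d) (ha : 1 ≤ a) (hak : a + 1 ≤ k) :
    par k d j < a ↔ j < 2 + a * (d - 1) := by
  have h1 : par k d j < a ↔ (j - 2) / (d - 1) < a := by unfold par; omega
  rw [h1, Nat.div_lt_iff_lt_mul (by omega)]
  have : 1 ≤ a * (d - 1) := Nat.mul_pos (by omega) (by omega)
  omega

lemma opt_dsum_lt {n k d a : ℕ} (hd : 2 ≤ d) (hn : 2 + k * (d - 1) ≤ n)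
    (hak : a + 1 ≤ k) : dsum (optTree n k d) a = a * d := by
  by_cases ha : a = 0
  · subst ha; simp [dsum, seg]
  have h0 : a * (d - 1) + a = a * d := by
    obtain ⟨e, rfl⟩ : ∃ e, d = e + 1 := ⟨d - 1, by omega⟩
    simp; ring
  have h1 : a * (d - 1) + (d - 1) ≤ k * (d - 1) := by
    have := Nat.mul_le_mul_right (d - 1) hak
    linarith [Nat.add_mul a 1 (d - 1)]
  have h2 : a ≤ a * (d - 1) := Nat.le_mul_of_pos_right a (by omega)
  obtain ⟨T, hT1, hTn, h, hc⟩ := (opt_spiral n k d).thr (a := a) (by omega) (by omega)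
  have h3 := hc n (by omega) le_rfl
  rw [cnt_full] at h3
  have hT : T = 2 + a * (d - 1) := by
    by_contra hne
    rcases Nat.lt_or_gt_of_ne hne with hlt | hlt
    · have := h T (by omega) (by omega)
      rw [par_lt_iff hd (by omega) hak] at this
      omega
    · have := h (2 + a * (d - 1)) (by omega) (by omega)
      rw [par_lt_iff hd (by omega) hak] at this
      omega
  omega

lemma opt_dsum_ge {n k d a : ℕ} (hk : 1 ≤ k) (hak : k ≤ a) (han : a ≤ n) :
    dsum (optTree n k d) a + 2 = n + a := by
  obtain ⟨T, hT1, hTn, h, hc⟩ := (opt_spiral n k d).thr (a := a) (by omega) (by omega)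
  have h3 := hc n (by omega) le_rfl
  rw [cnt_full] at h3
  have hT : T = n := by
    by_contra hne
    have := h T (by omega) (by omega)
    have h1 : par k d T ≤ k - 1 := by unfold par; omega
    omega
  omega

lemma opt_deg_lt {n k d : ℕ} (hd : 2 ≤ d) (hn : 2 + k * (d - 1) ≤ n) (i : Fin n)
    (hi : i.val + 1 < k) : (optTree n k d).degree i = d := by
  have h1 := dsum_succ (optTree n k d) i
  rw [opt_dsum_lt hd hn (by omega), opt_dsum_lt hd hn (by omega)] at h1
  linarith [Nat.add_mul i.val 1 d]

lemma opt_deg_ge {n k d : ℕ} (hk : 1 ≤ k) (i : Fin n) (hi : k ≤ i.val) :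
    (optTree n k d).degree i = 1 := by
  have h1 := dsum_succ (optTree n k d) i
  have h2 := opt_dsum_ge (n := n) (d := d) (a := i.val) hk hi (by omega)
  have h3 := opt_dsum_ge (n := n) (d := d) (a := i.val + 1) hk (by omega) (by omega)
  omega

lemma opt_deg_last {n k d : ℕ} (hd : 2 ≤ d) (hn : 2 + k * (d - 1) ≤ n) (i : Fin n)
    (hi : i.val + 1 = k) : (optTree n k d).degree i + (k - 1) * d + 2 = n + k := by
  have h1 := dsum_succ (optTree n k d) i
  have h2 := opt_dsum_lt (n := n) (d := d) (a := i.val) hd hn (by omega)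
  have h3 := opt_dsum_ge (n := n) (d := d) (a := i.val + 1) (k := k) (by omega) (by omega) (by omega)
  have h4 : k - 1 = i.val := by omega
  rw [h4]
  omega

lemma opt_deg_last_ge {n k d : ℕ} (hd : 2 ≤ d) (hn : 2 + k * (d - 1) ≤ n) (i : Fin n)
    (hi : i.val + 1 = k) : d ≤ (optTree n k d).degree i := by
  have h1 := opt_deg_last hd hn i hi
  obtain ⟨e, rfl⟩ : ∃ e, d = e + 1 := ⟨d - 1, by omega⟩
  obtain ⟨m, rfl⟩ : ∃ m, k = m + 1 := ⟨k - 1, by omega⟩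
  simp only [Nat.add_sub_cancel] at *
  nlinarith

lemma opt_interior {n k d : ℕ} (hk : 1 ≤ k) (hd : 2 ≤ d) (hn : 2 + k * (d - 1) ≤ n) (i : Fin n) :
    IsInterior (optTree n k d) i ↔ i.val < k := by
  unfold IsInterior
  rcases lt_trichotomy (i.val + 1) k with h | h | h
  · rw [opt_deg_lt hd hn i h]; omega
  · have := opt_deg_last_ge hd hn i h; omega
  · rw [opt_deg_ge hk i (by omega)]; omega

lemma opt_boundary {n k d : ℕ} (hk : 1 ≤ k) (hd : 2 ≤ d) (hn : 2 + k * (d - 1) ≤ n) (i : Fin n) :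
    IsBoundary (optTree n k d) i ↔ k ≤ i.val := by
  unfold IsBoundary
  rcases lt_trichotomy (i.val + 1) k with h | h | h
  · rw [opt_deg_lt hd hn i h]; omega
  · have := opt_deg_last_ge hd hn i h; omega
  · rw [opt_deg_ge hk i (by omega)]; omega

lemma opt_bound {n k d : ℕ} (hd : 2 ≤ d) (hn : 2 + k * (d - 1) ≤ n) : k + 2 ≤ n := by
  have : k ≤ k * (d - 1) := Nat.le_mul_of_pos_right k (by omega)
  omega

lemma opt_treeWithBoundary {n k d : ℕ} (hk : 1 ≤ k) (hd : 2 ≤ d) (hn : 2 + k * (d - 1) ≤ n) :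
    IsTreeWithBoundary (optTree n k d) := by
  have := opt_bound hd hn
  exact ⟨(opt_spiral n k d).isTree (by omega), ⟨⟨0, by omega⟩, (opt_interior hk hd hn _).mpr hk⟩,
    ⟨⟨k, by omega⟩, (opt_boundary hk hd hn _).mpr le_rfl⟩⟩

lemma opt_class {n k d : ℕ} (hk : 1 ≤ k) (hd : 2 ≤ d) (hn : 2 + k * (d - 1) ≤ n) :
    inClassTd k d (optTree n k d) := by
  have hkn := opt_bound hd hn
  refine ⟨opt_treeWithBoundary hk hd hn, ?_, ?_⟩
  · have : interiorFinset (optTree n k d) = seg n k := by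
      ext i; simp [interiorFinset, opt_interior hk hd hn, mem_seg]
    rw [this, card_seg (by omega)]
  · intro v hv
    rw [opt_interior hk hd hn] at hv
    rcases lt_trichotomy (v.val + 1) k with h | h | h
    · rw [opt_deg_lt hd hn v h]
    · exact opt_deg_last_ge hd hn v h
    · omega

lemma opt_SLO {n k d : ℕ} (hk : 1 ≤ k) (hd : 2 ≤ d) (hn : 2 + k * (d - 1) ≤ n) :
    IsSLOStarTree (optTree n k d) := by
  refine ⟨opt_treeWithBoundary hk hd hn, ⟨0, by omega⟩, (· < ·),
    (opt_spiral n k d).isSLOStar (by omega) ?_ ?_⟩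
  · intro i j hij
    rw [opt_boundary hk hd hn, opt_boundary hk hd hn]
    intro h
    exact h.trans (le_of_lt hij)
  · intro i j hij hi hj
    rw [opt_interior hk hd hn] at hi hj
    have hij' : i.val < j.val := hij
    rw [opt_deg_lt hd hn i (by omega)]
    exact (opt_class hk hd hn).2.2 j ((opt_interior hk hd hn j).mpr hj)

/-! ### The layer cake formula and the main inequality -/

/-- Extension of a function on `Fin n` by zero to `ℕ`. -/
def ex {n : ℕ} (F : Fin n → ℝ) (j : ℕ) : ℝ := if h : j < n then F ⟨j, h⟩ else 0

lemma ex_val {n : ℕ} (F : Fin n → ℝ) (i : Fin n) : ex F i.val = F i := by simp [ex]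

lemma telescope (g : ℕ → ℝ) (i m : ℕ) (h : i ≤ m) :
    ∑ a ∈ range m, (if i < a + 1 then g a - g (a + 1) else 0) = g i - g m := by
  induction m, h using Nat.le_induction with
  | base =>
    rw [sub_self]
    refine Finset.sum_eq_zero fun a ha => if_neg ?_
    rw [Finset.mem_range] at ha; omega
  | succ m hm ih =>
    rw [Finset.sum_range_succ, ih, if_pos (by omega)]; ring

lemma ex_layer {n : ℕ} (F : Fin n → ℝ) (i : Fin n) :
    F i = ∑ a ∈ range n, (if i.val < a + 1 then ex F a - ex F (a + 1) else 0) := by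
  rw [telescope (ex F) i.val n i.isLt.le, ex_val]
  simp [ex]

/-- The layer cake formula: the quadratic form of `M` is a combination of the sums of `M` over
products of initial segments, with coefficients that do not depend on `M`. -/
lemma qf_layer {n : ℕ} (M : Fin n → Fin n → ℝ) (F : Fin n → ℝ) :
    qf M F = ∑ a ∈ range n, ∑ b ∈ range n, (ex F a - ex F (a + 1)) * (ex F b - ex F (b + 1)) *
      ∑ i ∈ seg n (a + 1), ∑ j ∈ seg n (b + 1), M i j := by
  have h1 : ∀ i j : Fin n, M i j * F i * F j = ∑ a ∈ range n, ∑ b ∈ range n,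
      (if i.val < a + 1 then (if j.val < b + 1 then
        (ex F a - ex F (a + 1)) * (ex F b - ex F (b + 1)) * M i j else 0) else 0) := by
    intro i j
    rw [mul_assoc, ex_layer F i, ex_layer F j, Finset.sum_mul_sum, Finset.mul_sum]
    refine Finset.sum_congr rfl fun a _ => ?_
    rw [Finset.mul_sum]
    refine Finset.sum_congr rfl fun b _ => ?_
    split_ifs <;> ring
  unfold qf
  simp only [h1]
  have h2 : ∀ i : Fin n, ∑ j : Fin n, ∑ a ∈ range n, ∑ b ∈ range n,
      (if i.val < a + 1 then (if j.val < b + 1 then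
        (ex F a - ex F (a + 1)) * (ex F b - ex F (b + 1)) * M i j else 0) else 0) =
      ∑ a ∈ range n, ∑ b ∈ range n, ∑ j : Fin n,
      (if i.val < a + 1 then (if j.val < b + 1 then
        (ex F a - ex F (a + 1)) * (ex F b - ex F (b + 1)) * M i j else 0) else 0) := by
    intro i
    rw [Finset.sum_comm]
    exact Finset.sum_congr rfl fun a _ => Finset.sum_comm
  simp only [h2]
  rw [Finset.sum_comm]
  refine Finset.sum_congr rfl fun a _ => ?_
  rw [Finset.sum_comm]
  refine Finset.sum_congr rfl fun b _ => ?_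
  rw [Finset.mul_sum, seg, Finset.sum_filter]
  refine Finset.sum_congr rfl fun i _ => ?_
  split_ifs with h
  · rw [Finset.mul_sum, seg, Finset.sum_filter]
  · simp

lemma lapM_seg {n : ℕ} (H : SimpleGraph (Fin n)) (a b : ℕ) :
    ∑ i ∈ seg n a, ∑ j ∈ seg n b, lapM H i j = (dsum H (min a b) : ℝ) - cnt H a b := by
  unfold lapM
  simp only [Finset.sum_sub_distrib]
  congr 1
  · simp only [Finset.sum_ite_eq]
    rw [← Finset.sum_filter, dsum]
    push_cast
    refine Finset.sum_congr ?_ fun _ _ => rfl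
    ext i; simp only [Finset.mem_filter, mem_seg]; omega
  · unfold cnt pc
    push_cast
    rfl

/-- The vertices of the tree `H` are numbered with the `k` interior vertices, all of degree at
least `d`, first. -/
structure Sorted {n : ℕ} (k d : ℕ) (H : SimpleGraph (Fin n)) : Prop where
  tree : H.IsTree
  deg_lt : ∀ i : Fin n, i.val < k → d ≤ H.degree i
  deg_ge : ∀ i : Fin n, k ≤ i.val → H.degree i = 1

lemma Sorted.dsum_ge {n k d : ℕ} {H : SimpleGraph (Fin n)} (hS : Sorted k d H) (hkn : k ≤ n) :
    ∀ a ≤ k, a * d ≤ dsum H a := by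
  intro a
  induction a with
  | zero => intro _; simp
  | succ a ih =>
    intro ha
    have h1 := dsum_succ H ⟨a, by omega⟩
    have h2 := hS.deg_lt ⟨a, by omega⟩ (by simp; omega)
    have h3 := ih (by omega)
    simp only at h1
    rw [h1, Nat.add_mul]
    omega

lemma Sorted.dsum_eq {n k d : ℕ} {H : SimpleGraph (Fin n)} (hS : Sorted k d H) (hkn : k ≤ n) :
    ∀ a, k ≤ a → a ≤ n → dsum H a + 2 = n + a := by
  have key : ∀ a, k ≤ a → a ≤ n → dsum H a = dsum H k + (a - k) := by
    intro a ha
    induction a, ha using Nat.le_induction with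
    | base => intro _; omega
    | succ a ha ih =>
      intro han
      have h1 := dsum_succ H ⟨a, by omega⟩
      have h2 := hS.deg_ge ⟨a, by omega⟩ ha
      have h3 := ih (by omega)
      simp only at h1
      omega
  intro a ha han
  have h1 := key a ha han
  have h2 := key n hkn le_rfl
  have h3 := dsum_full hS.tree
  omega

lemma Sorted.bound {n k d : ℕ} {H : SimpleGraph (Fin n)} (hS : Sorted k d H) (hkn : k ≤ n)
    (hd : 2 ≤ d) : 2 + k * (d - 1) ≤ n := by
  have h1 := hS.dsum_ge hkn k le_rfl
  have h2 := hS.dsum_eq hkn k le_rfl hkn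
  obtain ⟨e, rfl⟩ : ∃ e, d = e + 1 := ⟨d - 1, by omega⟩
  simp only [Nat.add_sub_cancel]
  rw [Nat.mul_add] at h1
  omega

lemma Sorted.dsum_opt_le {n k d a : ℕ} {H : SimpleGraph (Fin n)} (hS : Sorted k d H)
    (hk : 1 ≤ k) (hkn : k ≤ n) (hd : 2 ≤ d) (ha : a ≤ k) :
    dsum (optTree n k d) a ≤ dsum H a := by
  rcases Nat.lt_or_ge a k with h | h
  · rw [opt_dsum_lt hd (hS.bound hkn hd) h]
    exact hS.dsum_ge hkn a ha
  · have h1 := opt_dsum_ge (n := n) (d := d) (a := a) hk h (by omega)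
    have h2 := hS.dsum_eq hkn a h (by omega)
    omega

/-- The extremal tree minimises every coefficient of the layer cake formula at once. -/
lemma Sorted.term_le {n k d a b : ℕ} {H : SimpleGraph (Fin n)} (hS : Sorted k d H)
    (hk : 1 ≤ k) (hkn : k ≤ n) (hd : 2 ≤ d) (ha : 1 ≤ a) (hab : a ≤ b) (hb : b ≤ k) :
    dsum (optTree n k d) a + cnt H a b ≤ dsum H a + cnt (optTree n k d) a b := by
  have h1 := (opt_spiral n k d).cnt_eq (a := a) (b := b) ha hab (by omega)
  have h2 := cnt_le hS.tree ha hab (by omega)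
  have h3 := cnt_le_dsum H (a := a) (b := b) (by omega)
  have h4 := hS.dsum_opt_le hk hkn hd (a := a) (by omega)
  omega

lemma Sorted.coeff_nonneg {n k d a b : ℕ} {H : SimpleGraph (Fin n)} (hS : Sorted k d H)
    (hk : 1 ≤ k) (hkn : k ≤ n) (hd : 2 ≤ d) (ha : 1 ≤ a) (hak : a ≤ k) (hb : 1 ≤ b)
    (hbk : b ≤ k) :
    0 ≤ ((dsum H (min a b) : ℝ) - cnt H a b) -
      ((dsum (optTree n k d) (min a b) : ℝ) - cnt (optTree n k d) a b) := by
  rcases le_total a b with h | h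
  · rw [min_eq_left h]
    have := hS.term_le hk hkn hd ha h hbk
    have : (dsum (optTree n k d) a : ℝ) + cnt H a b ≤ dsum H a + cnt (optTree n k d) a b := by
      exact_mod_cast this
    linarith
  · rw [min_eq_right h]
    have := hS.term_le hk hkn hd hb h hak
    rw [cnt, cnt, pc_symm H, pc_symm (optTree n k d)] at this
    change dsum (optTree n k d) b + cnt H a b ≤ dsum H b + cnt (optTree n k d) a b at this
    have : (dsum (optTree n k d) b : ℝ) + cnt H a b ≤ dsum H b + cnt (optTree n k d) a b := by
      exact_mod_cast this
    linarith

lemma ex_antitone {n : ℕ} {F : Fin n → ℝ} (hF : Antitone F) (h0 : ∀ i, 0 ≤ F i) :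
    Antitone (ex F) := by
  intro i j hij
  unfold ex
  split_ifs with h1 h2 h3
  · exact hF hij
  · omega
  · exact h0 _
  · exact le_rfl

lemma ex_zero {n k : ℕ} {F : Fin n → ℝ} (hk : ∀ i : Fin n, k ≤ i.val → F i = 0) {j : ℕ}
    (hj : k ≤ j) : ex F j = 0 := by
  unfold ex
  split_ifs with h
  · exact hk _ hj
  · rfl

/-- The extremal tree has the smallest energy; in case of equality the edge counts agree for all
initial segments that are level sets of `F`. -/
lemma Sorted.energy {n k d : ℕ} {H : SimpleGraph (Fin n)} (hS : Sorted k d H)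
    (hk : 1 ≤ k) (hkn : k ≤ n) (hd : 2 ≤ d) {F : Fin n → ℝ} (hF : Antitone F)
    (h0 : ∀ i, 0 ≤ F i) (hFk : ∀ i : Fin n, k ≤ i.val → F i = 0) :
    qf (lapM (optTree n k d)) F ≤ qf (lapM H) F ∧
    (qf (lapM H) F = qf (lapM (optTree n k d)) F → ∀ a b, 1 ≤ a → a ≤ b → b ≤ k →
      ex F a < ex F (a - 1) → ex F b < ex F (b - 1) →
      dsum H a = dsum (optTree n k d) a ∧ cnt H a b = cnt (optTree n k d) a b) := by
  have hanti := ex_antitone hF h0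
  have hdiff : qf (lapM H) F - qf (lapM (optTree n k d)) F =
      ∑ a ∈ range n, ∑ b ∈ range n, (ex F a - ex F (a + 1)) * (ex F b - ex F (b + 1)) *
        (((dsum H (min (a + 1) (b + 1)) : ℝ) - cnt H (a + 1) (b + 1)) -
        ((dsum (optTree n k d) (min (a + 1) (b + 1)) : ℝ) -
          cnt (optTree n k d) (a + 1) (b + 1))) := by
    rw [qf_layer, qf_layer]
    simp only [lapM_seg, ← Finset.sum_sub_distrib, mul_sub]
  have hterm : ∀ a b, 0 ≤ (ex F a - ex F (a + 1)) * (ex F b - ex F (b + 1)) *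
        (((dsum H (min (a + 1) (b + 1)) : ℝ) - cnt H (a + 1) (b + 1)) -
        ((dsum (optTree n k d) (min (a + 1) (b + 1)) : ℝ) -
          cnt (optTree n k d) (a + 1) (b + 1))) := by
    intro a b
    by_cases ha : a < k
    · by_cases hb : b < k
      · refine mul_nonneg (mul_nonneg ?_ ?_) (hS.coeff_nonneg hk hkn hd (by omega) (by omega)
          (by omega) (by omega))
        · exact sub_nonneg.mpr (hanti (by omega))
        · exact sub_nonneg.mpr (hanti (by omega))
      · rw [ex_zero hFk (show k ≤ b by omega), ex_zero hFk (show k ≤ b + 1 by omega)]; simp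
    · rw [ex_zero hFk (show k ≤ a by omega), ex_zero hFk (show k ≤ a + 1 by omega)]; simp
  constructor
  · rw [← sub_nonneg, hdiff]
    exact Finset.sum_nonneg fun a _ => Finset.sum_nonneg fun b _ => hterm a b
  · intro heq
    rw [heq, sub_self] at hdiff
    have hz : ∀ a b, 1 ≤ a → a ≤ b → b ≤ k → ex F a < ex F (a - 1) → ex F b < ex F (b - 1) →
        dsum H a + cnt (optTree n k d) a b = dsum (optTree n k d) a + cnt H a b := by
      intro a b ha hab hb hla hlb
      have h1 := (Finset.sum_eq_zero_iff_of_nonneg (fun a _ =>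
        Finset.sum_nonneg fun b _ => hterm a b)).mp hdiff.symm (a - 1) (by simp; omega)
      have h2 := (Finset.sum_eq_zero_iff_of_nonneg (fun b _ => hterm (a - 1) b)).mp h1 (b - 1)
        (by simp; omega)
      rw [Nat.sub_add_cancel ha, Nat.sub_add_cancel (ha.trans hab), min_eq_left hab] at h2
      rcases mul_eq_zero.mp h2 with h3 | h3
      · rcases mul_eq_zero.mp h3 with h4 | h4 <;> linarith
      · have : (dsum H a : ℝ) + cnt (optTree n k d) a b
            = dsum (optTree n k d) a + cnt H a b := by linarith
        exact_mod_cast this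
    intro a b ha hab hb hla hlb
    have h1 := hz a a ha le_rfl (by omega) hla hla
    have h2 := hz a b ha hab hb hla hlb
    have h3 := hS.dsum_opt_le hk hkn hd (a := a) (by omega)
    have h4 := (opt_spiral n k d).cnt_eq (a := a) (b := a) ha le_rfl (by omega)
    have h5 := cnt_self_le hS.tree (a := a) ha (by omega)
    have h6 : 2 * a ≤ dsum (optTree n k d) a + 2 := by
      rcases Nat.lt_or_ge a k with h | h
      · rw [opt_dsum_lt hd (hS.bound hkn hd) h]
        nlinarith
      · have := opt_dsum_ge (n := n) (d := d) (a := a) hk h (by omega)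
        omega
    omega

/-! ### Ties in the eigenfunction of the extremal tree -/

/-- The first child of vertex `i` of the extremal tree (for the root, vertex `1` is a further
child, which is not counted here). -/
def fc (d i : ℕ) : ℕ := 2 + i * (d - 1)

lemma fc_succ (d i : ℕ) : fc d (i + 1) = fc d i + (d - 1) := by
  unfold fc; rw [Nat.add_mul]; omega

lemma fc_mono {d i j : ℕ} (h : i ≤ j) : fc d i ≤ fc d j := by
  unfold fc
  have := Nat.mul_le_mul_right (d - 1) h
  omega

lemma le_fc {d : ℕ} (hd : 2 ≤ d) (i : ℕ) : i + 2 ≤ fc d i := by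
  unfold fc
  have : i ≤ i * (d - 1) := Nat.le_mul_of_pos_right i (by omega)
  omega

/-- A positive Dirichlet eigenfunction of the extremal tree which is antitone in the numbering of
the vertices. -/
structure Eig (n k d : ℕ) (F : Fin n → ℝ) (lam : ℝ) : Prop where
  hk : 1 ≤ k
  hd : 2 ≤ d
  hn : 2 + k * (d - 1) ≤ n
  anti : Antitone F
  pos : ∀ i : Fin n, i.val < k → 0 < F i
  zero : ∀ i : Fin n, k ≤ i.val → F i = 0
  eig : ∀ i : Fin n, i.val < k → lapApply (optTree n k d) F i = lam * F i

lemma Eig.nonneg {n k d : ℕ} {F : Fin n → ℝ} {lam : ℝ} (h : Eig n k d F lam) (i : Fin n) :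
    0 ≤ F i := by
  rcases Nat.lt_or_ge i.val k with hi | hi
  · exact (h.pos i hi).le
  · exact (h.zero i hi).ge

lemma Eig.ex_anti {n k d : ℕ} {F : Fin n → ℝ} {lam : ℝ} (h : Eig n k d F lam) :
    Antitone (ex F) := ex_antitone h.anti h.nonneg

lemma Eig.lt_n {n k d : ℕ} {F : Fin n → ℝ} {lam : ℝ} (h : Eig n k d F lam) : k + 2 ≤ n :=
  opt_bound h.hd h.hn

lemma Eig.ex_pos {n k d : ℕ} {F : Fin n → ℝ} {lam : ℝ} (h : Eig n k d F lam) (i : ℕ) :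
    0 < ex F i ↔ i < k := by
  have := h.lt_n
  constructor
  · intro h1
    by_contra h2
    rw [ex_zero h.zero (by omega)] at h1
    exact lt_irrefl _ h1
  · intro hi
    rw [ex, dif_pos (by omega : i < n)]
    exact h.pos _ hi

lemma Eig.fc_le {n k d : ℕ} {F : Fin n → ℝ} {lam : ℝ} (h : Eig n k d F lam) {i : ℕ}
    (hi : i ≤ k) : fc d i ≤ n := (fc_mono hi).trans h.hn

lemma Eig.child_sum {n k d : ℕ} {F : Fin n → ℝ} {lam : ℝ} (h : Eig n k d F lam) (hk2 : 2 ≤ k)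
    {i : ℕ} (hi : i < k) :
    ∑ w ∈ range n, (if 0 < w ∧ par k d w = i then ex F w else 0) =
      (if i = 0 then ex F 1 else 0) + ∑ t ∈ range (d - 1), ex F (fc d i + t) := by
  have hd := h.hd
  rcases Nat.lt_or_ge (i + 1) k with hik | hik
  · have hparle : ∀ w, par k d w < i + 1 ↔ w < fc d (i + 1) := fun w =>
      par_lt_iff hd (by omega) (by omega)
    have hle : fc d (i + 1) ≤ n := h.fc_le (by omega)
    rw [← Finset.sum_filter]
    have hsub : fc d (i + 1) - fc d i = d - 1 := by rw [fc_succ]; omega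
    by_cases h0 : i = 0
    · subst h0
      have : (range n).filter (fun w => 0 < w ∧ par k d w = 0) = Finset.Ico 1 (fc d 1) := by
        ext w
        have := hparle w
        simp only [Finset.mem_filter, Finset.mem_range, Finset.mem_Ico]
        simp only [zero_add] at this hle
        omega
      rw [this, Finset.sum_eq_sum_Ico_succ_bot (by have := le_fc hd 1; omega), if_pos rfl,
        Finset.sum_Ico_eq_sum_range]
      have h2 : fc d 0 = 2 := by simp [fc]
      rw [h2] at hsub ⊢
      simp only [zero_add] at hsub
      rw [hsub]
    · have hparle' : ∀ w, par k d w < i ↔ w < fc d i := fun w =>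
        par_lt_iff hd (by omega) (by omega)
      have : (range n).filter (fun w => 0 < w ∧ par k d w = i) =
          Finset.Ico (fc d i) (fc d (i + 1)) := by
        ext w
        have := hparle w
        have := hparle' w
        have := le_fc hd i
        simp only [Finset.mem_filter, Finset.mem_range, Finset.mem_Ico]
        omega
      rw [this, Finset.sum_Ico_eq_sum_range, hsub, if_neg h0, zero_add]
  · rw [if_neg (by omega), zero_add]
    rw [Finset.sum_eq_zero, Finset.sum_eq_zero]
    · intro t _
      have := le_fc hd i
      exact ex_zero h.zero (by omega)
    · intro w _
      split_ifs with hw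
      · have := par_lt_iff (k := k) (d := d) (a := i) (j := w) hd (by omega) (by omega)
        have h3 := le_fc hd i
        unfold fc at h3
        exact ex_zero h.zero (by omega)
      · rfl

lemma Eig.nbr_sum {n k d : ℕ} {F : Fin n → ℝ} {lam : ℝ} (h : Eig n k d F lam) (hk2 : 2 ≤ k)
    (i : Fin n) (hi : i.val < k) :
    ∑ w ∈ (optTree n k d).neighborFinset i, F w =
      ex F (if i.val = 0 then 1 else par k d i) + ∑ t ∈ range (d - 1), ex F (fc d i + t) := by
  have h1 : ∑ w ∈ (optTree n k d).neighborFinset i, F w =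
      ∑ w : Fin n, if (optTree n k d).Adj i w then F w else 0 := by
    rw [← Finset.sum_filter]
    refine Finset.sum_congr ?_ fun _ _ => rfl
    ext w; simp
  have h2 : ∀ w : Fin n, (if (optTree n k d).Adj i w then F w else 0) =
      (fun w : ℕ => (if 0 < w ∧ par k d w = i then ex F w else 0) +
        (if w = par k d i then (if i.val = 0 then 0 else ex F w) else 0)) w.val := by
    intro w
    have h3 : (optTree n k d).Adj i w ↔
      (0 < w.val ∧ par k d w = i.val) ∨ (0 < i.val ∧ par k d i = w.val) := Iff.rfl
    have h4 := par_lt k d i.val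
    have h5 := par_lt k d w.val
    simp only [h3, ex_val]
    rcases Nat.eq_zero_or_pos i.val with h0 | h0
    · simp [h0]
    · by_cases hA : 0 < w.val ∧ par k d w = i.val
      · rw [if_pos (Or.inl hA), if_pos hA, if_neg (by omega), add_zero]
      · by_cases hB : w.val = par k d i
        · rw [if_pos (Or.inr ⟨h0, hB.symm⟩), if_neg hA, if_pos hB, if_neg (by omega), zero_add]
        · rw [if_neg (by omega), if_neg hA, if_neg hB, zero_add]
  rw [h1, Finset.sum_congr rfl fun w _ => h2 w]
  refine (Fin.sum_univ_eq_sum_range (fun w : ℕ => (if 0 < w ∧ par k d w = i then ex F w else 0) +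
        (if w = par k d i then (if i.val = 0 then 0 else ex F w) else 0)) n).trans ?_
  rw [Finset.sum_add_distrib, h.child_sum hk2 hi, Finset.sum_ite_eq']
  have : par k d i ∈ range n := by
    rw [Finset.mem_range]
    have := par_lt k d i.val
    have hin := i.isLt
    rcases Nat.eq_zero_or_pos i.val with h0 | h0
    · rw [h0]; unfold par; simp; omega
    · omega
  rw [if_pos this]
  split_ifs <;> ring

/-- If two interior vertices `a < b` of the extremal tree carry the same value, then comparing
their eigenvalue equations shows that `b` has degree `d` and that all vertices from `fc d a`, the
first child of `a`, to `fc d (b + 1) - 1`, the last child of `b`, carry the same value. -/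
lemma Eig.tie {n k d : ℕ} {F : Fin n → ℝ} {lam : ℝ} (h : Eig n k d F lam) {a b : ℕ}
    (hab : a < b) (hb : b < k) (heq : ex F a = ex F b) :
    (optTree n k d).degree ⟨b, by have := h.lt_n; omega⟩ = d ∧
      ex F (fc d a) = ex F (fc d (b + 1) - 1) := by
  have hlt := h.lt_n
  have hd := h.hd
  have ha' : a < n := by omega
  have hb' : b < n := by omega
  have hA := h.ex_anti
  have ea := h.eig ⟨a, ha'⟩ (by simp; omega)
  have eb := h.eig ⟨b, hb'⟩ hb
  unfold lapApply at ea eb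
  rw [h.nbr_sum (by omega) _ (by simp; omega)] at ea eb
  have hFa : F ⟨a, ha'⟩ = ex F a := (ex_val F ⟨a, ha'⟩).symm
  have hFb : F ⟨b, hb'⟩ = ex F a := ((ex_val F ⟨b, hb'⟩).symm).trans heq.symm
  rw [hFa] at ea
  rw [hFb] at eb
  have hda := opt_deg_lt (n := n) hd h.hn ⟨a, ha'⟩ (by simp; omega)
  have hdb : d ≤ (optTree n k d).degree ⟨b, hb'⟩ := by
    rcases Nat.lt_or_ge (b + 1) k with h1 | h1
    · rw [opt_deg_lt hd h.hn _ h1]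
    · exact opt_deg_last_ge hd h.hn _ (by simp; omega)
  rw [hda] at ea
  have hdb' : (d : ℝ) ≤ ((optTree n k d).degree ⟨b, hb'⟩ : ℝ) := by exact_mod_cast hdb
  have hpos : 0 < ex F a := (h.ex_pos a).mpr (by omega)
  simp only at ea eb
  have hu : ex F (if b = 0 then 1 else par k d b) ≤ ex F (if a = 0 then 1 else par k d a) := by
    rw [if_neg (by omega)]
    split_ifs with h0
    · subst h0
      have : ex F 1 = ex F 0 := le_antisymm (hA (by omega)) (heq ▸ hA (by omega))
      rw [this]; exact hA (Nat.zero_le _)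
    · exact hA ((opt_spiral n k d).mono a b (by omega) hab.le hb')
  have hfc := fc_mono (d := d) hab.le
  have hterm : ∀ t ∈ range (d - 1), ex F (fc d b + t) ≤ ex F (fc d a + t) := fun t _ =>
    hA (by omega)
  have hs := Finset.sum_le_sum hterm
  have hmul : 0 ≤ (((optTree n k d).degree ⟨b, hb'⟩ : ℝ) - d) * ex F a :=
    mul_nonneg (by linarith) hpos.le
  have hmul0 : (((optTree n k d).degree ⟨b, hb'⟩ : ℝ) - d) * ex F a = 0 := by nlinarith
  have hseq : ∑ t ∈ range (d - 1), ex F (fc d b + t) = ∑ t ∈ range (d - 1), ex F (fc d a + t) := by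
    nlinarith
  have hall := (Finset.sum_eq_sum_iff_of_le hterm).mp hseq
  constructor
  · rcases mul_eq_zero.mp hmul0 with h1 | h1
    · have : ((optTree n k d).degree ⟨b, hb'⟩ : ℝ) = d := by linarith
      exact_mod_cast this
    · exact absurd h1 hpos.ne'
  · have h0 := hall 0 (by simp; omega)
    have h1 := hall (d - 2) (by simp; omega)
    have hbs := fc_succ d b
    have has := fc_succ d a
    have hfc' := fc_mono (d := d) (show a + 1 ≤ b by omega)
    have e1 : fc d (b + 1) - 1 = fc d b + (d - 2) := by omega
    rw [e1, h1]
    apply le_antisymm _ (hA (by omega))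
    have : ex F (fc d a) = ex F (fc d b) := by simpa using h0.symm
    rw [this]
    exact hA (by omega)

/-! ### Level sets in the case of equality -/

/-- `b` is the end of a level set of the antitone function `F`. -/
def Lev (n : ℕ) (F : Fin n → ℝ) (b : ℕ) : Prop :=
  1 ≤ b ∧ b ≤ n ∧ (b = n ∨ ex F b < ex F (b - 1))

/-- A tree `H` with sorted vertices that has the same energy as the extremal tree, at an
eigenfunction of the extremal tree. -/
structure Ext (n k d : ℕ) (F : Fin n → ℝ) (lam : ℝ) (H : SimpleGraph (Fin n)) : Prop where
  e : Eig n k d F lam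
  sorted : Sorted k d H
  energy : qf (lapM H) F = qf (lapM (optTree n k d)) F

section
variable {n k d : ℕ} {F : Fin n → ℝ} {lam : ℝ} {H : SimpleGraph (Fin n)}

lemma Eig.lev_k (h : Eig n k d F lam) : Lev n F k := by
  have := h.lt_n
  have := h.hk
  refine ⟨by omega, by omega, Or.inr ?_⟩
  rw [ex_zero h.zero le_rfl]
  exact (h.ex_pos _).mpr (by omega)

lemma Eig.lev_le (h : Eig n k d F lam) {b : ℕ} (hb : Lev n F b) : b ≤ k ∨ b = n := by
  rcases hb.2.2 with h1 | h1
  · exact Or.inr h1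
  · left
    by_contra h2
    rw [ex_zero h.zero (by omega), ex_zero h.zero (by omega)] at h1
    exact lt_irrefl _ h1

/-- The level set of `v` is the interval `[x, y)`. -/
lemma Eig.level (h : Eig n k d F lam) {v : ℕ} (hv : v < n) :
    ∃ x y, x ≤ v ∧ v < y ∧ (x = 0 ∨ Lev n F x) ∧ Lev n F y ∧
      (∀ j < n, ex F v < ex F j ↔ j < x) ∧ (∀ j < n, ex F v ≤ ex F j ↔ j < y) := by
  have hA := h.ex_anti
  obtain ⟨x, hxn, hx⟩ := exists_threshold n (fun j => ex F v < ex F j)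
    (fun i j hij _ hj => lt_of_lt_of_le hj (hA hij))
  obtain ⟨y, hyn, hy⟩ := exists_threshold n (fun j => ex F v ≤ ex F j)
    (fun i j hij _ hj => le_trans hj (hA hij))
  have h1 : x ≤ v := by
    by_contra h2
    exact lt_irrefl _ ((hx v hv).mpr (by omega))
  have h2 : v < y := (hy v hv).mp le_rfl
  refine ⟨x, y, h1, h2, ?_, ?_, hx, hy⟩
  · rcases Nat.eq_zero_or_pos x with h0 | h0
    · exact Or.inl h0
    · right
      refine ⟨h0, hxn, Or.inr ?_⟩
      have h3 := (hx (x - 1) (by omega)).mpr (by omega)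
      have h4 : ¬ ex F v < ex F x := fun h5 => by
        have := (hx x (by omega)).mp h5
        omega
      linarith
  · refine ⟨by omega, hyn, ?_⟩
    rcases Nat.lt_or_ge y n with h3 | h3
    · right
      have h4 := (hy (y - 1) (by omega)).mpr (by omega)
      have h5 : ¬ ex F v ≤ ex F y := fun h5 => by
        have := (hy y h3).mp h5
        omega
      linarith
    · left; omega

lemma Ext.hkn (h : Ext n k d F lam H) : k ≤ n := by have := h.e.lt_n; omega

/-- Degree sums and edge counts agree with those of the extremal tree at the level sets. -/
lemma Ext.lev (h : Ext n k d F lam H) {a b : ℕ} (ha : Lev n F a) (hb : Lev n F b) (hab : a ≤ b) :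
    dsum H a = dsum (optTree n k d) a ∧
      cnt H a b + 2 = min (dsum (optTree n k d) a + 2) (a + b) := by
  have hlt := h.e.lt_n
  have hen := (h.sorted.energy h.e.hk h.hkn h.e.hd h.e.anti h.e.nonneg h.e.zero).2 h.energy
  have hda : dsum H a = dsum (optTree n k d) a := by
    rcases h.e.lev_le ha with h1 | h1
    · rcases ha.2.2 with h2 | h2
      · omega
      · exact (hen a a ha.1 le_rfl h1 h2 h2).1
    · have h2 := h.sorted.dsum_eq h.hkn a (by omega) (by omega)
      have h3 := opt_dsum_ge (n := n) (d := d) (a := a) h.e.hk (by omega) (by omega)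
      omega
  refine ⟨hda, ?_⟩
  have hc := (opt_spiral n k d).cnt_eq ha.1 hab hb.2.1
  rcases h.e.lev_le hb with h1 | h1
  · rcases ha.2.2 with h2 | h2
    · omega
    · rcases hb.2.2 with h3 | h3
      · omega
      · rw [(hen a b ha.1 hab h1 h2 h3).2, hc]
  · subst h1
    rw [cnt_full] at hc ⊢
    omega

/-- Every neighbour of one of the first `a` vertices is among the first `b` ones if these see
the whole degree sum. -/
lemma cnt_nbr {a b : ℕ} (hb : b ≤ n) (h : cnt H a b = dsum H a) {i j : Fin n} (hi : i.val < a)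
    (hij : H.Adj i j) : j.val < b := by
  by_contra hj
  have h1 := pc_split_right H (seg n a) (seg_mono (n := n) hb)
  have h2 := cnt_full H a
  unfold cnt at h h2
  refine pc_eq_zero (H := H) (A := seg n a) (B := seg n n \ seg n b) (by omega)
    (mem_seg.mpr hi) ?_ hij
  simp only [Finset.mem_sdiff, mem_seg]
  exact ⟨j.isLt, hj⟩

/-- If the edge counts are maximal, then there are no edges inside the interval `[a, b)`. -/
lemma cnt_indep (hH : H.IsTree) {a b : ℕ} (ha : 1 ≤ a) (hab : a ≤ b) (hb : b ≤ n)
    (h1 : cnt H a a + 2 = 2 * a) (h2 : cnt H a b + 2 = a + b) {i j : Fin n} (hi : a ≤ i.val)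
    (hib : i.val < b) (hj : a ≤ j.val) (hjb : j.val < b) : ¬ H.Adj i j := by
  have h3 := cnt_self_le hH (ha.trans hab) hb
  have h4 := two_pc H (seg_mono (n := n) hab)
  unfold cnt at h1 h2 h3
  refine pc_eq_zero (H := H) (A := seg n b \ seg n a) (B := seg n b \ seg n a) (by omega) ?_ ?_ <;>
  · simp only [Finset.mem_sdiff, mem_seg]; omega

/-- If the edge counts are maximal, then each vertex between `a` and `b` has exactly one
neighbour below `a`. -/
lemma cnt_one (hH : H.IsTree) {a b : ℕ} (hab : a ≤ b) (hb : b ≤ n)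
    (h1 : cnt H a a + 2 = 2 * a) (h2 : cnt H a b + 2 = a + b) {v : Fin n} (hv : a ≤ v.val)
    (hvb : v.val < b) : ∃! i : Fin n, i.val < a ∧ H.Adj i v := by
  have hle : ∀ v ∈ seg n b \ seg n a, pc H {v} (seg n a) ≤ 1 := by
    intro v hv
    have hva : v ∉ seg n a := (Finset.mem_sdiff.mp hv).2
    have h3 := forest_bound hH (A := insert v (seg n a)) ⟨v, Finset.mem_insert_self _ _⟩
    rw [Finset.card_insert_of_notMem hva, card_seg (by omega)] at h3
    have h4 := two_pc H (Finset.subset_insert v (seg n a))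
    have h5 := pc_split_right H (seg n a) (Finset.subset_insert v (seg n a))
    have h6 : insert v (seg n a) \ seg n a = {v} := by
      ext w; simp only [Finset.mem_sdiff, Finset.mem_insert, Finset.mem_singleton]
      constructor
      · rintro ⟨h | h, h'⟩
        · exact h
        · exact absurd h h'
      · rintro rfl; exact ⟨Or.inl rfl, hva⟩
    rw [h6] at h4 h5
    have h7 : pc H {v} {v} = 0 := by simp [pc]
    have h8 := pc_symm H (seg n a) {v}
    unfold cnt at h1
    omega
  have hsum : ∑ v ∈ seg n b \ seg n a, pc H {v} (seg n a) = ∑ v ∈ seg n b \ seg n a, 1 := by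
    have h3 : ∑ v ∈ seg n b \ seg n a, pc H {v} (seg n a) = pc H (seg n b \ seg n a) (seg n a) := by
      simp [pc]
    have h4 := pc_split_left H (seg n a) (seg_mono (n := n) hab)
    have h5 := pc_symm H (seg n a) (seg n b)
    have h6 : (seg n b \ seg n a).card = b - a := by
      rw [Finset.card_sdiff_of_subset (seg_mono hab), card_seg hb, card_seg (by omega)]
    rw [h3]
    simp only [Finset.sum_const, smul_eq_mul, mul_one, h6]
    unfold cnt at h1 h2
    omega
  have hone := (Finset.sum_eq_sum_iff_of_le hle).mp hsum v
    (by simp only [Finset.mem_sdiff, mem_seg]; omega)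
  have hcard : ((seg n a).filter fun i => H.Adj v i).card = 1 := by
    rw [← hone, pc, Finset.sum_singleton, Finset.sum_boole]; simp
  obtain ⟨i, hi⟩ := Finset.card_eq_one.mp hcard
  have hmem : ∀ j, (j.val < a ∧ H.Adj v j) ↔ j = i := by
    intro j
    have := Finset.ext_iff.mp hi j
    simpa [mem_seg] using this
  refine ⟨i, ?_, ?_⟩
  · have := (hmem i).mpr rfl
    exact ⟨this.1, this.2.symm⟩
  · intro j hj
    exact (hmem j).mp ⟨hj.1, hj.2.symm⟩

lemma Eig.dsum_lt (h : Eig n k d F lam) {x : ℕ} (hx : x < k) :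
    dsum (optTree n k d) x + 2 = x + fc d x := by
  rw [opt_dsum_lt h.hd h.hn hx]
  have := h.hd
  obtain ⟨e, rfl⟩ : ∃ e, d = e + 1 := ⟨d - 1, by omega⟩
  simp only [fc, Nat.add_sub_cancel, Nat.mul_add]
  omega

lemma Eig.dsum_tie (h : Eig n k d F lam) {x y : ℕ} (hxy : x + 1 < y) (hy : y ≤ k)
    (heq : ex F x = ex F (y - 1)) : dsum (optTree n k d) y + 2 = y + fc d y := by
  have h1 := (h.tie (a := x) (b := y - 1) (by omega) (by omega) heq).1
  have hlt := h.lt_n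
  have h2 := dsum_succ (optTree n k d) ⟨y - 1, by omega⟩
  rw [h1] at h2
  have h3 := h.dsum_lt (x := y - 1) (by omega)
  have h4 := fc_succ d (y - 1)
  simp only [Nat.sub_add_cancel (show 1 ≤ y by omega)] at h2 h4
  have := h.hd
  omega

/-- A level set does not reach the children of its first vertex. -/
lemma Eig.level_fc (h : Eig n k d F lam) {x y : ℕ} (hx : x < y) (hy : y ≤ k)
    (heq : ex F x = ex F (y - 1)) (hlev : Lev n F y) : y ≤ fc d x := by
  have hd := h.hd
  have hA := h.ex_anti
  by_contra hc
  have h1 := le_fc hd x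
  have h2 := (h.tie (a := x) (b := y - 1) (by omega) (by omega) heq).2
  rw [Nat.sub_add_cancel (by omega)] at h2
  have h3 := le_fc hd y
  have h4 : ex F (fc d x) = ex F (y - 1) :=
    le_antisymm (heq ▸ hA (by omega)) (hA (by omega))
  have h5 : ex F (fc d y - 1) ≤ ex F y := hA (by omega)
  have hlt := h.lt_n
  rcases hlev.2.2 with h6 | h6
  · omega
  · linarith

/-- Edge counts at a level set `[x, y)` other than the first one. -/
lemma Ext.level_cnt (h : Ext n k d F lam H) {x y : ℕ} (hxy : x < y)
    (hlx : Lev n F x) (hly : Lev n F y) (heq : ex F x = ex F (y - 1)) :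
    cnt H x x + 2 = 2 * x ∧ cnt H x y + 2 = x + y := by
  have h1 := (h.lev hlx hlx le_rfl).2
  have h2 := (h.lev hlx hly hxy.le).2
  have hle : x + y ≤ dsum (optTree n k d) x + 2 := by
    rcases Nat.lt_or_ge x k with hx | hx
    · have h3 := h.e.dsum_lt hx
      have hy : y ≤ k := by
        have h4 := (h.e.ex_pos x).mpr hx
        rw [heq] at h4
        have := (h.e.ex_pos _).mp h4
        omega
      have h4 := h.e.level_fc hxy hy heq hly
      omega
    · have h3 := opt_dsum_ge (n := n) (d := d) (a := x) h.e.hk hx hlx.2.1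
      have := hly.2.1
      omega
  omega

lemma Ext.dsum_ge (h : Ext n k d F lam H) {a : ℕ} (ha : a ≤ k) :
    2 * a ≤ dsum (optTree n k d) a := by
  have h0 := h.e.hd
  rcases Nat.lt_or_ge a k with h1 | h1
  · have h2 := h.e.dsum_lt h1
    have h3 := le_fc h0 a
    omega
  · have h2 := opt_dsum_ge (n := n) (d := d) (a := a) h.e.hk h1 (by have := h.hkn; omega)
    have := h.e.lt_n
    omega

/-- Every vertex but the first has exactly one smaller neighbour. -/
lemma Ext.parent (h : Ext n k d F lam H) {v : Fin n} (hv : 0 < v.val) :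
    ∃! i : Fin n, i < v ∧ H.Adj i v := by
  obtain ⟨x, y, hxv, hvy, hlx, hly, hx, hy⟩ := h.e.level v.isLt
  have hA := h.e.ex_anti
  have hyn := hly.2.1
  have heq : ex F x = ex F (y - 1) := by
    apply le_antisymm _ (hA (by omega))
    have h1 := (hy (y - 1) (by omega)).mpr (by omega)
    have h2 : ¬ ex F v < ex F x := fun h2 => by
      have := (hx x (by omega)).mp h2
      omega
    linarith
  rcases hlx with h0 | hlx
  · subst h0
    have hyk : y ≤ k := by
      have h4 := (h.e.ex_pos 0).mpr h.e.hk
      rw [heq] at h4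
      have := (h.e.ex_pos _).mp h4
      omega
    have hy2 := h.e.level_fc (by omega) hyk heq hly
    have hfc : fc d 0 = 2 := by simp [fc]
    have hv1 : v.val = 1 := by omega
    have hy2' : y = 2 := by omega
    subst hy2'
    have h1 := (h.lev hly hly le_rfl).2
    have h2 := h.dsum_ge hyk
    have hlt := h.e.lt_n
    refine ⟨⟨0, by omega⟩, ⟨Fin.lt_def.mpr hv, ?_⟩, ?_⟩
    · by_contra hna
      have : cnt H 2 2 = 0 := by
        unfold cnt pc
        refine Finset.sum_eq_zero fun i hi => ?_
        refine Finset.sum_eq_zero fun j hj => if_neg fun hij => ?_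
        rw [mem_seg] at hi hj
        have hne : i.val ≠ j.val := fun he => hij.ne (Fin.ext he)
        rcases Nat.eq_zero_or_pos i.val with hi0 | hi0
        · exact hna (by
            convert hij using 1
            · exact Fin.ext hi0.symm
            · exact Fin.ext (by omega))
        · exact hna (by
            convert hij.symm using 1
            · exact Fin.ext (by simp; omega)
            · exact Fin.ext (by omega))
      omega
    · rintro j ⟨hj, -⟩
      rw [Fin.lt_def] at hj
      exact Fin.ext (by simp; omega)
  · obtain ⟨h1, h2⟩ := h.level_cnt (by omega) hlx hly heq
    obtain ⟨i, hi, hu⟩ := cnt_one h.sorted.tree (by omega) hyn h1 h2 hxv hvy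
    refine ⟨i, ⟨Fin.lt_def.mpr (by omega), hi.2⟩, ?_⟩
    rintro j ⟨hj, hjv⟩
    rw [Fin.lt_def] at hj
    apply hu
    refine ⟨?_, hjv⟩
    by_contra hjx
    exact cnt_indep h.sorted.tree hlx.1 (by omega) hyn h1 h2 (i := j) (j := v) (by omega) (by omega) hxv
      hvy hjv

/-- Parents of vertices with different values appear in the correct order. -/
lemma Ext.no_cross (h : Ext n k d F lam H) {j j' p p' : Fin n} (hF : F j' < F j)
    (hp : p < j) (hpj : H.Adj p j) (hpj' : H.Adj p' j') : p ≤ p' := by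
  by_contra hlt'
  have hA := h.e.ex_anti
  have hd := h.e.hd
  rw [not_le, Fin.lt_def] at hlt'
  rw [Fin.lt_def] at hp
  rw [← ex_val F j, ← ex_val F j'] at hF
  have hjj : j.val < j'.val := by
    by_contra hc
    have := hA (show j'.val ≤ j.val by omega)
    linarith
  have hpp : ex F p ≤ ex F p' := hA (by omega)
  have hjp : ex F j ≤ ex F p := hA (by omega)
  rcases lt_or_eq_of_le hpp with hlt | heq
  · -- the level sets of `p'` and `j` allow no edge from `p` to `j`
    obtain ⟨-, x, -, hpx, -, hlx, -, hx⟩ := h.e.level p'.isLt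
    obtain ⟨-, z, -, hjz, -, hlz, -, hz⟩ := h.e.level j.isLt
    have hp'z := (hz p' p'.isLt).mp (by linarith)
    have hpz := (hz p p.isLt).mp hjp
    have hj'z : ¬ j'.val < z := fun hc => by
      have := (hz j' j'.isLt).mpr hc
      linarith
    have hpx' : ¬ p.val < x := fun hc => by
      have := (hx p p.isLt).mpr hc
      linarith
    have hxz : x ≤ z := by omega
    have h1 := h.lev hlx hlx le_rfl
    have h2 := h.lev hlx hlz hxz
    have h3 : cnt H x z ≠ dsum H x := fun hc => hj'z (cnt_nbr hlz.2.1 hc hpx hpj')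
    have h4 := cnt_le_dsum H (a := x) hlz.2.1
    exact cnt_indep h.sorted.tree hlx.1 hxz hlz.2.1 (by omega) (by omega) (i := p) (j := j)
      (by omega) hpz (by omega) hjz hpj
  · obtain ⟨x, y, hxp, hpy, hlx, hly, hx, hy⟩ := h.e.level p'.isLt
    have hpy' := (hy p p.isLt).mp heq.ge
    have hyn := hly.2.1
    have h0 : 0 ≤ ex F j' := by rw [ex_val]; exact h.e.nonneg _
    have hxy : ex F x = ex F (y - 1) := by
      apply le_antisymm _ (hA (by omega))
      have h1 := (hy (y - 1) (by omega)).mpr (by omega)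
      have h2 : ¬ ex F p' < ex F x := fun h2 => by
        have := (hx x (by omega)).mp h2
        omega
      linarith
    have hyk : y ≤ k := by
      have h1 := (hy (y - 1) (by omega)).mpr (by omega)
      have := (h.e.ex_pos (y - 1)).mp (by linarith)
      omega
    have htie := (h.e.tie (a := x) (b := y - 1) (by omega) (by omega) hxy).2
    rw [Nat.sub_add_cancel (by omega)] at htie
    have hDy := h.e.dsum_tie (by omega) hyk hxy
    have hDx := h.e.dsum_lt (x := x) (by omega)
    have hfy := h.e.fc_le hyk
    have hfx := le_fc hd x
    have hfy' := le_fc hd y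
    have hfxy := fc_mono (d := d) (show x + 1 ≤ y by omega)
    have hfxs := fc_succ d x
    obtain ⟨z, w, hzc, hcw, hlz, hlw, hz, hw⟩ := h.e.level (v := fc d x) (by omega)
    have hyw := (hw (fc d y - 1) (by omega)).mp htie.le
    have h1 := h.lev hly hlw (by omega)
    have hj'w := cnt_nbr hlw.2.1 (by omega) hpy hpj'
    have hjz : z ≤ j.val := by
      rcases hlx with hx0 | hlx
      · subst hx0
        have : fc d 0 = 2 := by simp [fc]
        omega
      · by_contra hc
        have hxz : x ≤ z := by omega
        have h2 := h.lev hlx hlx le_rfl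
        have hlz' : Lev n F z := by
          rcases hlz with h3 | h3
          · have := hlx.1
            omega
          · exact h3
        have h3 := h.lev hlx hlz' hxz
        exact cnt_indep h.sorted.tree hlx.1 hxz hlz'.2.1 (by omega) (by omega) (i := p) (j := j)
          (by omega) (by omega) (by omega) (by omega) hpj
    have e1 := (hw j' j'.isLt).mpr hj'w
    have e2 : ¬ ex F (fc d x) < ex F j := fun hc => by
      have := (hz j j.isLt).mp hc
      omega
    linarith

lemma Ext.degree_eq (h : Ext n k d F lam H) (i : Fin n) :
    H.degree i = (optTree n k d).degree i := by
  have hlt := h.e.lt_n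
  have hk := h.e.hk
  have hd := h.e.hd
  rcases Nat.lt_or_ge i.val k with hi | hi
  swap
  · rw [h.sorted.deg_ge i hi, opt_deg_ge hk i hi]
  have hge : ∀ a ≤ k, ∀ b, a + b ≤ k → dsum H a + b * d ≤ dsum H (a + b) := by
    intro a ha b
    induction b with
    | zero => intro _; simp
    | succ b ih =>
      intro hb
      have h1 := ih (by omega)
      have h2 := dsum_succ H ⟨a + b, by omega⟩
      have h3 := h.sorted.deg_lt ⟨a + b, by omega⟩ (by simp; omega)
      simp only at h2
      rw [show a + (b + 1) = a + b + 1 by omega, h2, Nat.add_mul]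
      omega
  -- a degree sum of the least possible value forces all degrees to be `d`
  have key : ∀ m ≤ k, dsum H m = m * d → i.val < m → H.degree i = d := by
    intro m hm hD him
    have h1 := hge 0 (by omega) i.val (by omega)
    have h2 := dsum_succ H i
    have h3 := hge (i.val + 1) (by omega) (m - (i.val + 1)) (by omega)
    have h4 := h.sorted.deg_lt i (by omega)
    rw [show i.val + 1 + (m - (i.val + 1)) = m by omega, hD] at h3
    rw [zero_add] at h1
    have h5 : (m - (i.val + 1)) * d + (i.val + 1) * d = m * d := by
      rw [← Nat.add_mul]; congr 1; omega
    rw [Nat.add_mul] at h5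
    omega
  have hDk := (h.lev h.e.lev_k h.e.lev_k le_rfl).1
  have hmul : (k - 1) * d + d = k * d := by
    rw [← Nat.succ_mul]; congr 1; omega
  by_cases hk1 : k = 1
  · have h1 := dsum_succ H i
    have h2 := dsum_succ (optTree n k d) i
    have h3 : i.val = 0 := by omega
    rw [h3] at h1 h2
    simp only [zero_add, ← hk1] at h1 h2
    have h4 : dsum H 0 = 0 := by simp [dsum, seg]
    have h5 : dsum (optTree n k d) 0 = 0 := by simp [dsum, seg]
    omega
  by_cases hlev : Lev n F (k - 1)
  · have hD := (h.lev hlev hlev le_rfl).1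
    rw [opt_dsum_lt hd h.e.hn (by omega)] at hD
    rcases Nat.lt_or_ge i.val (k - 1) with h1 | h1
    · rw [key (k - 1) (by omega) hD h1, opt_deg_lt hd h.e.hn i (by omega)]
    · have h2 := dsum_succ H i
      have h3 := dsum_succ (optTree n k d) i
      rw [show i.val + 1 = k by omega, show i.val = k - 1 by omega] at h2 h3
      have h4 := opt_dsum_lt (n := n) (a := k - 1) hd h.e.hn (by omega)
      omega
  · have heq : ex F (k - 2) = ex F (k - 1) := by
      by_contra hne
      apply hlev
      refine ⟨by omega, by omega, Or.inr ?_⟩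
      exact lt_of_le_of_ne (h.e.ex_anti (by omega)) (fun h' => hne h'.symm)
    have h1 := (h.e.tie (a := k - 2) (b := k - 1) (by omega) (by omega) heq).1
    have h2 := dsum_succ (optTree n k d) ⟨k - 1, by omega⟩
    have h3 := opt_dsum_lt (n := n) (a := k - 1) hd h.e.hn (by omega)
    simp only [Nat.sub_add_cancel hk] at h2
    rw [key k le_rfl (by omega) hi]
    rcases Nat.lt_or_ge (i.val + 1) k with h4 | h4
    · rw [opt_deg_lt hd h.e.hn i h4]
    · have h5 : i = ⟨k - 1, by omega⟩ := Fin.ext (by simp only; omega)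
      rw [h5, h1]

end

/-! ### Invariance under isomorphisms -/

section
variable {n : ℕ} {G H : SimpleGraph (Fin n)}

lemma iso_degree (e : G ≃g H) (v : Fin n) : H.degree (e v) = G.degree v :=
  e.degree_eq v

lemma iso_interior (e : G ≃g H) (v : Fin n) : IsInterior H (e v) ↔ IsInterior G v := by
  unfold IsInterior; rw [iso_degree e]

lemma iso_boundary (e : G ≃g H) (v : Fin n) : IsBoundary H (e v) ↔ IsBoundary G v := by
  unfold IsBoundary; rw [iso_degree e]

lemma iso_lapM (e : G ≃g H) (i j : Fin n) : lapM H (e i) (e j) = lapM G i j := by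
  unfold lapM
  rw [iso_degree e]
  congr 1
  · simp
  · simp only [e.map_adj_iff]

lemma iso_qf (e : G ≃g H) (f : Fin n → ℝ) : qf (lapM G) (fun i => f (e i)) = qf (lapM H) f := by
  unfold qf
  rw [← Equiv.sum_comp e.toEquiv (fun i => ∑ j, lapM H i j * f i * f j)]
  refine Finset.sum_congr rfl fun i _ => ?_
  rw [← Equiv.sum_comp e.toEquiv (fun j => lapM H (e.toEquiv i) j * f (e.toEquiv i) * f j)]
  refine Finset.sum_congr rfl fun j _ => ?_
  simp only [RelIso.coe_fn_toEquiv, iso_lapM]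

lemma iso_treeWithBoundary (e : G ≃g H) (hH : IsTreeWithBoundary H) : IsTreeWithBoundary G := by
  obtain ⟨h1, ⟨v, hv⟩, ⟨w, hw⟩⟩ := hH
  refine ⟨e.isTree_iff.mpr h1, ⟨e.symm v, ?_⟩, ⟨e.symm w, ?_⟩⟩
  · rw [← iso_interior e]; simpa using hv
  · rw [← iso_boundary e]; simpa using hw

lemma iso_lapApply (e : G ≃g H) (f : Fin n → ℝ) (v : Fin n) :
    lapApply G (fun i => f (e i)) v = lapApply H f (e v) := by
  rw [lapApply_eq, lapApply_eq, ← Equiv.sum_comp e.toEquiv (fun j => lapM H (e v) j * f j)]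
  refine Finset.sum_congr rfl fun j _ => ?_
  simp only [RelIso.coe_fn_toEquiv, iso_lapM]

lemma iso_eigenpair (e : G ≃g H) {μ : ℝ} {f : Fin n → ℝ} (h : IsDirichletEigenpair H μ f) :
    IsDirichletEigenpair G μ (fun i => f (e i)) := by
  obtain ⟨h1, h2, h3⟩ := h
  refine ⟨fun h0 => h1 ?_, fun v hv => h2 _ ((iso_boundary e v).mpr hv), fun v hv => ?_⟩
  · funext i
    have := congrFun h0 (e.symm i)
    simpa using this
  · rw [iso_lapApply]
    exact h3 _ ((iso_interior e v).mpr hv)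

lemma iso_lambda (e : G ≃g H) : dirichletLambda G = dirichletLambda H := by
  unfold dirichletLambda
  congr 1
  ext μ
  exact ⟨fun ⟨f, hf⟩ => ⟨_, iso_eigenpair e.symm hf⟩, fun ⟨f, hf⟩ => ⟨_, iso_eigenpair e hf⟩⟩

lemma iso_dist_le (e : G ≃g H) (hG : G.Connected) (u v : Fin n) :
    H.dist (e u) (e v) ≤ G.dist u v := by
  obtain ⟨w, hw⟩ := hG.exists_walk_length_eq_dist u v
  rw [← hw, ← SimpleGraph.Walk.length_map e.toHom w]
  exact SimpleGraph.dist_le _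

lemma iso_dist (e : G ≃g H) (hG : G.Connected) (u v : Fin n) :
    H.dist (e u) (e v) = G.dist u v := by
  apply le_antisymm (iso_dist_le e hG u v)
  have := iso_dist_le e.symm (e.connected_iff.mp hG) (e u) (e v)
  simpa using this

lemma iso_child (e : G ≃g H) (hG : G.Connected) (v₀ v w : Fin n) :
    IsChild H (e v₀) (e v) (e w) ↔ IsChild G v₀ v w := by
  unfold IsChild
  rw [iso_dist e hG, iso_dist e hG, e.map_adj_iff]

lemma iso_SLO (e : G ≃g H) (hH : IsSLOStarTree H) : IsSLOStarTree G := by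
  obtain ⟨h0, v₀, lt, ⟨hlt, h1, h2, h3⟩, h4⟩ := hH
  have hT := iso_treeWithBoundary e h0
  have hC := hT.1.1
  have hv : v₀ = e (e.symm v₀) := by simp
  rw [hv] at h1 h2
  refine ⟨hT, e.symm v₀, fun v w => lt (e v) (e w), ⟨?_, ?_, ?_, ?_⟩, ?_⟩
  · exact
      { trichotomous := fun a b h h' => e.injective (hlt.trichotomous _ _ h h')
        irrefl := fun a => hlt.irrefl _
        trans := fun a b c => hlt.trans _ _ _ }
  · intro v w hvw
    have := h1 _ _ hvw
    rwa [iso_dist e hC, iso_dist e hC] at this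
  · intro v₁ v₂ w₁ w₂ hv hc₁ hc₂
    exact h2 _ _ _ _ hv ((iso_child e hC _ _ _).mpr hc₁) ((iso_child e hC _ _ _).mpr hc₂)
  · intro v w hvw hb
    exact (iso_boundary e w).mp (h3 _ _ hvw ((iso_boundary e v).mpr hb))
  · intro v w hvw hi hi'
    have := h4 _ _ hvw ((iso_interior e v).mpr hi) ((iso_interior e w).mpr hi')
    rwa [iso_degree e, iso_degree e] at this

lemma iso_sorted {k d : ℕ} (e : G ≃g H) (hk : ∀ i, (e i).val < k ↔ i.val < k)
    (hS : Sorted k d H) : Sorted k d G := by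
  refine ⟨e.isTree_iff.mpr hS.tree, ?_, ?_⟩
  · intro i hi
    rw [← iso_degree e]
    exact hS.deg_lt _ ((hk i).mpr hi)
  · intro i hi
    rw [← iso_degree e]
    refine hS.deg_ge _ ?_
    have := hk i
    omega

end

/-! ### The case of equality -/

section
variable {n k d : ℕ} {F : Fin n → ℝ} {lam : ℝ} {H : SimpleGraph (Fin n)}

/-- The least smaller neighbour of each vertex, as a lexicographically ordered sequence; a vertex
without a smaller neighbour gets the value `0`. -/
def key (H : SimpleGraph (Fin n)) : Lex (Fin n → ℕ) :=
  toLex fun i => sInf {m : ℕ | ∃ p : Fin n, p.val = m ∧ p < i ∧ H.Adj p i}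

lemma Ext.key_eq (h : Ext n k d F lam H) {p i : Fin n} (hp : p < i) (hpi : H.Adj p i) :
    ofLex (key H) i = p.val := by
  have h0 : 0 < i.val := by rw [Fin.lt_def] at hp; omega
  obtain ⟨q, -, hq⟩ := h.parent h0
  have : {m : ℕ | ∃ p : Fin n, p.val = m ∧ p < i ∧ H.Adj p i} = {p.val} := by
    ext m
    simp only [Set.mem_ofPred_eq, Set.mem_singleton_iff]
    constructor
    · rintro ⟨r, rfl, hr⟩
      rw [hq r hr, hq p ⟨hp, hpi⟩]
    · rintro rfl
      exact ⟨p, rfl, hp, hpi⟩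
  simp [key, this]

/-- Exchanging the names of two vertices with equal values preserves all hypotheses. -/
lemma Ext.swap (h : Ext n k d F lam H) {j j' : Fin n} (hF : F j = F j') :
    Ext n k d F lam (H.comap (Equiv.swap j j')) := by
  have hk : j.val < k ↔ j'.val < k := by
    rw [← h.e.ex_pos, ← h.e.ex_pos, ex_val, ex_val, hF]
  have hks : ∀ i : Fin n, (Equiv.swap j j' i).val < k ↔ i.val < k := by
    intro i
    rw [Equiv.swap_apply_def]
    split_ifs with h1 h2
    · rw [h1, hk]
    · rw [h2, hk]
    · rfl
  have hFs : (fun i => F (Equiv.swap j j' i)) = F := by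
    funext i
    rw [Equiv.swap_apply_def]
    split_ifs with h1 h2
    · rw [h1, hF]
    · rw [h2, hF]
    · rfl
  refine ⟨h.e, iso_sorted (SimpleGraph.Iso.comap (Equiv.swap j j') H) hks h.sorted, ?_⟩
  · rw [← h.energy, ← iso_qf (SimpleGraph.Iso.comap (Equiv.swap j j') H) F]
    congr 1
    exact hFs.symm

/-- If the sequence of parents has a descent, the two vertices carry the same value, and
exchanging them makes the sequence of parents lexicographically smaller. -/
lemma Ext.key_lt (h : Ext n k d F lam H) {j j' p p' : Fin n} (hj : j < j') (hp : p < j)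
    (hpj : H.Adj p j) (hpj' : H.Adj p' j') (hinv : p' < p) :
    F j = F j' ∧ key (H.comap (Equiv.swap j j')) < key H := by
  have hF : F j = F j' := by
    apply le_antisymm _ (h.e.anti hj.le)
    by_contra hlt
    exact absurd (h.no_cross (not_le.mp hlt) hp hpj hpj') (not_le.mpr hinv)
  refine ⟨hF, ?_⟩
  have hs := h.swap hF
  have hfix : ∀ q : Fin n, q < j → Equiv.swap j j' q = q := fun q hq =>
    Equiv.swap_apply_of_ne_of_ne hq.ne (hq.trans hj).ne
  refine ⟨j, ?_, ?_⟩
  · intro i hi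
    rcases Nat.eq_zero_or_pos i.val with h0 | h0
    · have : ∀ G : SimpleGraph (Fin n),
          {m : ℕ | ∃ p : Fin n, p.val = m ∧ p < i ∧ G.Adj p i} = ∅ := by
        intro G
        ext m
        simp only [Set.mem_ofPred_eq, Set.mem_empty_iff_false, iff_false]
        rintro ⟨r, -, hr, -⟩
        rw [Fin.lt_def] at hr
        omega
      exact congrArg sInf ((this _).trans (this _).symm)
    · obtain ⟨q, ⟨hq, hqi⟩, -⟩ := h.parent h0
      refine (hs.key_eq hq ?_).trans (h.key_eq hq hqi).symm
      rw [SimpleGraph.comap_adj, hfix q (hq.trans hi), hfix i hi]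
      exact hqi
  · have h1 := h.key_eq hp hpj
    have h2 := hs.key_eq (p := p') (i := j) (hinv.trans hp) (by
      rw [SimpleGraph.comap_adj, hfix p' (hinv.trans hp), Equiv.swap_apply_left]
      exact hpj')
    rw [Fin.lt_def] at hinv
    change ofLex (key (H.comap (Equiv.swap j j'))) j < ofLex (key H) j
    omega

/-- Among the trees obtained by renaming vertices with equal values, the one whose sequence of
parents is lexicographically minimal has monotone parents, so it is a spiral tree; having the
degrees of the extremal tree, it is the extremal tree. -/
lemma Ext.iso_opt (h : Ext n k d F lam H) : Nonempty (H ≃g optTree n k d) := by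
  obtain ⟨K, hK, hmin⟩ := Finset.exists_min_image
    ((univ : Finset (SimpleGraph (Fin n))).filter
      fun K => Ext n k d F lam K ∧ Nonempty (H ≃g K)) key
    ⟨H, by simp only [Finset.mem_filter, Finset.mem_univ, true_and]
           exact ⟨h, ⟨SimpleGraph.Iso.refl⟩⟩⟩
  simp only [Finset.mem_filter, Finset.mem_univ, true_and] at hK hmin
  obtain ⟨hK, ⟨eK⟩⟩ := hK
  have hpar : ∀ j (hj : j < n), 0 < j → ∃ p : Fin n, p < ⟨j, hj⟩ ∧ K.Adj p ⟨j, hj⟩ ∧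
      ofLex (key K) ⟨j, hj⟩ = p.val := by
    intro j hj h0
    obtain ⟨p, ⟨hp, hpj⟩, -⟩ := hK.parent (v := ⟨j, hj⟩) h0
    exact ⟨p, hp, hpj, hK.key_eq hp hpj⟩
  have hs : Spiral K (fun j => if hj : j < n then ofLex (key K) ⟨j, hj⟩ else 0) := by
    refine ⟨?_, ?_, ?_⟩
    · intro j h0 hj
      obtain ⟨p, hp, -, hk⟩ := hpar j hj h0
      rw [dif_pos hj, hk]
      exact hp
    · intro i j h0 hij hj
      obtain ⟨p, hp, hpi, hk⟩ := hpar i (by omega) h0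
      obtain ⟨p', -, hpj, hk'⟩ := hpar j hj (by omega)
      rw [dif_pos hj, dif_pos (by omega : i < n), hk, hk']
      rcases Nat.eq_or_lt_of_le hij with rfl | hlt
      · omega
      by_contra hinv
      obtain ⟨hF, hkey⟩ := hK.key_lt (j := ⟨i, by omega⟩) (j' := ⟨j, hj⟩) hlt hp hpi hpj
        (by rw [Fin.lt_def]; omega)
      exact absurd (hmin _ ⟨hK.swap hF,
        ⟨eK.trans (SimpleGraph.Iso.comap (Equiv.swap _ _) K).symm⟩⟩) (not_le.mpr hkey)
    · have hone : ∀ i j : Fin n, i < j →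
          (K.Adj i j ↔ 0 < j.val ∧ ofLex (key K) j = i.val) := by
        intro i j hij
        constructor
        · intro ha
          exact ⟨by rw [Fin.lt_def] at hij; omega, hK.key_eq hij ha⟩
        · rintro ⟨h0, hk⟩
          obtain ⟨p, hp, hpj, hk'⟩ := hpar j j.isLt h0
          have : p = i := Fin.ext (hk'.symm.trans hk)
          rwa [← this]
      have hlt : ∀ j : Fin n, 0 < j.val → ofLex (key K) j < j.val := by
        intro j h0
        obtain ⟨p, hp, -, hk⟩ := hpar j j.isLt h0
        rw [hk]; exact hp
      intro i j
      simp only [i.isLt, j.isLt, dif_pos, Fin.eta]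
      have hi := hlt i
      have hj := hlt j
      rcases lt_trichotomy i j with hij | rfl | hij
      · rw [hone i j hij]
        rw [Fin.lt_def] at hij
        omega
      · have := K.irrefl (v := i)
        simp only [this, false_iff]
        omega
      · rw [K.adj_comm, hone j i hij]
        rw [Fin.lt_def] at hij
        omega
  have := hs.unique (opt_spiral n k d) hK.degree_eq
  exact ⟨this ▸ eK⟩

end

/-! ### Comparison of an arbitrary tree with the extremal tree -/

/-- The extremal tree has the smallest eigenvalue, and it is the only tree with this property. -/
lemma compare {n k d : ℕ} (hk : 1 ≤ k) (hd : 2 ≤ d) {G : SimpleGraph (Fin n)}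
    (hG : inClassTd k d G) :
    2 + k * (d - 1) ≤ n ∧ dirichletLambda (optTree n k d) ≤ dirichletLambda G ∧
      (dirichletLambda G = dirichletLambda (optTree n k d) → Nonempty (G ≃g optTree n k d)) := by
  obtain ⟨hT, hcard, hdeg⟩ := hG
  obtain ⟨-, f, hf0, hfpos, hfe⟩ := lambda_spec hT
  -- The vertices are renumbered in the order of decreasing `f`.
  set σ := Tuple.sort (fun i => - f i) with hσ
  have hanti : Antitone fun i => f (σ i) := by
    intro i j hij
    have := Tuple.monotone_sort (fun i => - f i) hij
    simp only [Function.comp] at this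
    linarith
  obtain ⟨H, e, he⟩ : ∃ H : SimpleGraph (Fin n), ∃ e : H ≃g G, ∀ i, e i = σ i :=
    ⟨G.comap σ, SimpleGraph.Iso.comap σ G, fun _ => rfl⟩
  set F : Fin n → ℝ := fun i => f (e i) with hFdef
  have hFanti : Antitone F := by
    have : F = fun i => f (σ i) := funext fun i => by rw [hFdef]; simp only [he]
    rw [this]; exact hanti
  have hFint : ∀ i, 0 < F i ↔ IsInterior G (e i) := by
    intro i
    constructor
    · intro h1
      by_contra h2
      have := hf0 _ h2
      exact absurd this h1.ne'
    · exact hfpos _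
  obtain ⟨T, hTn, hTT⟩ := exists_threshold n (fun j => ∃ h : j < n, 0 < F ⟨j, h⟩)
    (fun i j hij hj ⟨_, h⟩ => ⟨by omega, lt_of_lt_of_le h (hFanti hij)⟩)
  have hlt : ∀ i : Fin n, IsInterior G (e i) ↔ i.val < T := by
    intro i
    rw [← hFint, ← hTT i.val i.isLt]
    exact ⟨fun h => ⟨i.isLt, h⟩, fun ⟨_, h⟩ => h⟩
  have hTk : T = k := by
    rw [← hcard, ← card_seg hTn]
    refine Finset.card_bij (fun i _ => e i) ?_ (fun _ _ _ _ h => e.injective h) ?_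
    · intro i hi
      simp only [interiorFinset, Finset.mem_filter, Finset.mem_univ, true_and]
      exact (hlt i).mpr (mem_seg.mp hi)
    · intro v hv
      simp only [interiorFinset, Finset.mem_filter, Finset.mem_univ, true_and] at hv
      refine ⟨e.symm v, mem_seg.mpr ((hlt _).mp ?_), by simp⟩
      simpa using hv
  subst hTk
  have hS : Sorted T d H := by
    refine ⟨e.isTree_iff.mpr hT.1, ?_, ?_⟩
    · intro i hi
      rw [← iso_degree e]
      exact hdeg _ ((hlt i).mpr hi)
    · intro i hi
      rw [← iso_degree e]
      by_contra hb
      have := (hlt i).mp ((isInterior_of_not_boundary hT (e i)).mp hb)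
      omega
  have hn := hS.bound hTn hd
  refine ⟨hn, ?_⟩
  have hpos : ∀ i : Fin n, i.val < T → 0 < F i := fun i hi => (hFint i).mpr ((hlt i).mpr hi)
  have hzero : ∀ i : Fin n, T ≤ i.val → F i = 0 := fun i hi =>
    hf0 _ (fun hc => by have := (hlt i).mp hc; omega)
  have hnn : ∀ i, 0 ≤ F i := by
    intro i
    rcases Nat.lt_or_ge i.val T with hi | hi
    · exact (hpos i hi).le
    · exact (hzero i hi).ge
  have hen := (hS.energy hk hTn hd hFanti hnn hzero).1
  have hqH : qf (lapM H) F = dirichletLambda G * ∑ i, F i ^ 2 := by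
    rw [iso_qf e f, hfe]
    congr 1
    exact (Equiv.sum_comp e.toEquiv (fun i => f i ^ 2)).symm
  have hsq : 0 < ∑ i, F i ^ 2 := by
    apply sumsq_pos
    intro h0
    have h1 := hpos ⟨0, by omega⟩ hk
    rw [h0] at h1
    exact lt_irrefl _ h1
  have hopt := (lambda_spec (opt_treeWithBoundary hk hd hn)).1
  have hoptF := hopt F (fun v hv => hzero v (by rw [opt_interior hk hd hn] at hv; omega))
  constructor
  · have : dirichletLambda (optTree n T d) * ∑ i, F i ^ 2 ≤ dirichletLambda G * ∑ i, F i ^ 2 := by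
      linarith
    exact le_of_mul_le_mul_right this hsq
  · intro heq
    have hqo : qf (lapM (optTree n T d)) F =
        dirichletLambda (optTree n T d) * ∑ i, F i ^ 2 := by
      rw [heq] at hqH
      linarith
    have hE : Ext n T d F (dirichletLambda (optTree n T d)) H := by
      refine ⟨⟨hk, hd, hn, hFanti, hpos, hzero, ?_⟩, hS, by rw [hqH, hqo, heq]⟩
      intro i hi
      rw [lapApply_eq]
      exact min_eigen (lapM (optTree n T d)) (lapM_symm _) (IsInterior (optTree n T d)) _ hopt F
        (fun v hv => hzero v (by rw [opt_interior hk hd hn] at hv; omega)) hqo i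
        ((opt_interior hk hd hn i).mpr hi)
    obtain ⟨e'⟩ := hE.iso_opt
    exact ⟨e.symm.trans e'⟩

/-! ### Trees with a spiral-like ordering -/

/-- The vertices can be numbered in the order `lt`. -/
lemma exists_numbering {n : ℕ} (lt : Fin n → Fin n → Prop) (hlt : IsStrictTotalOrder (Fin n) lt) :
    ∃ σ : Equiv.Perm (Fin n), ∀ i j, lt (σ i) (σ j) ↔ i < j := by
  have hcard : ∀ v, (univ.filter fun w => lt w v).card < n := by
    intro v
    have : (univ.filter fun w => lt w v) ⊂ univ := by
      rw [Finset.ssubset_univ_iff]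
      intro h
      have : v ∈ (univ.filter fun w => lt w v) := by rw [h]; exact Finset.mem_univ v
      exact hlt.irrefl v (Finset.mem_filter.mp this).2
    simpa using Finset.card_lt_card this
  let r : Fin n → Fin n := fun v => ⟨_, hcard v⟩
  have hmono : ∀ u v, lt u v → r u < r v := by
    intro u v huv
    rw [Fin.lt_def]
    change (univ.filter fun w => lt w u).card < (univ.filter fun w => lt w v).card
    apply Finset.card_lt_card
    rw [Finset.ssubset_iff_of_subset]
    · exact ⟨u, by simpa using huv, by simpa using hlt.irrefl u⟩
    · intro w hw
      simp only [Finset.mem_filter, Finset.mem_univ, true_and] at hw ⊢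
      exact hlt.trans _ _ _ hw huv
  have hiff : ∀ u v, lt u v ↔ r u < r v := by
    intro u v
    refine ⟨hmono u v, fun h => ?_⟩
    by_contra hc
    by_cases hc' : lt v u
    · exact absurd (hmono _ _ hc') (not_lt.mpr h.le)
    · rw [hlt.trichotomous _ _ hc hc'] at h
      exact lt_irrefl _ h
  have hinj : Function.Injective r := by
    intro u v huv
    exact hlt.trichotomous _ _ (fun h => (hmono _ _ h).ne huv) (fun h => (hmono _ _ h).ne huv.symm)
  let ρ := Equiv.ofBijective r (Finite.injective_iff_bijective.mp hinj)
  refine ⟨ρ.symm, fun i j => ?_⟩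
  rw [hiff]
  have hρ : ∀ i, r (ρ.symm i) = i := fun i => Equiv.apply_symm_apply ρ i
  rw [hρ, hρ]

/-- A tree numbered along a spiral-like ordering is a spiral tree. -/
lemma spiral_of_SLO {n : ℕ} {H : SimpleGraph (Fin n)} (hH : H.IsTree) {u₀ : Fin n}
    (h1 : ∀ i j : Fin n, i < j → H.dist u₀ i ≤ H.dist u₀ j)
    (h2 : ∀ i i' j j' : Fin n, i < i' → IsChild H u₀ i j → IsChild H u₀ i' j' → j < j') :
    ∃ p, Spiral H p := by
  have hC := hH.1
  have h0 : ∀ i : Fin n, 0 < i.val → i ≠ u₀ := by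
    rintro i hi rfl
    have h3 := h1 ⟨0, by omega⟩ i (Fin.lt_def.mpr hi)
    rw [SimpleGraph.dist_self, Nat.le_zero, hC.dist_eq_zero_iff] at h3
    rw [h3] at hi
    exact lt_irrefl _ hi
  have hchild : ∀ i j, H.Adj i j → i < j → IsChild H u₀ i j := by
    intro i j hij hlt
    refine ⟨hij, ?_⟩
    have h3 := h1 i j hlt
    rcases hH.dist_eq_dist_add_one_of_adj u₀ hij with h4 | h4
    · omega
    · exact h4
  have hex : ∀ j : Fin n, 0 < j.val → ∃ i, i < j ∧ H.Adj i j := by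
    intro j hj
    obtain ⟨w, hw⟩ := hC.exists_walk_length_eq_dist j u₀
    cases w with
    | nil => exact absurd rfl (h0 _ hj)
    | cons hadj w =>
      rename_i i
      have h3 := SimpleGraph.dist_le w
      rw [SimpleGraph.Walk.length_cons] at hw
      rw [SimpleGraph.dist_comm] at h3 hw
      refine ⟨i, ?_, hadj.symm⟩
      by_contra hc
      rcases eq_or_lt_of_le (not_lt.mp hc) with h4 | h4
      · exact hadj.ne h4
      · have := h1 _ _ h4
        omega
  have huniq : ∀ i i' j : Fin n, i < j → H.Adj i j → i' < j → H.Adj i' j → i = i' := by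
    intro i i' j hi hij hi' hij'
    rcases lt_trichotomy i i' with h3 | h3 | h3
    · exact absurd (h2 _ _ _ _ h3 (hchild _ _ hij hi) (hchild _ _ hij' hi')) (lt_irrefl _)
    · exact h3
    · exact absurd (h2 _ _ _ _ h3 (hchild _ _ hij' hi') (hchild _ _ hij hi)) (lt_irrefl _)
  choose! P hP hPadj using hex
  refine ⟨fun j => if hj : j < n then (P ⟨j, hj⟩).val else 0, ?_, ?_, ?_⟩
  · intro j hj hjn
    rw [dif_pos hjn]
    exact hP ⟨j, hjn⟩ hj
  · intro i j hi hij hjn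
    rw [dif_pos hjn, dif_pos (by omega : i < n)]
    by_contra hc
    have := h2 _ _ _ _ (Fin.lt_def.mpr (not_le.mp hc))
      (hchild _ _ (hPadj ⟨j, hjn⟩ (by simp only; omega)) (hP ⟨j, hjn⟩ (by simp only; omega)))
      (hchild _ _ (hPadj ⟨i, by omega⟩ hi) (hP ⟨i, by omega⟩ hi))
    rw [Fin.lt_def] at this
    simp only at this
    omega
  · intro i j
    simp only [i.isLt, j.isLt, dif_pos, Fin.eta]
    constructor
    · intro hij
      rcases lt_or_gt_of_ne hij.ne with h3 | h3
      · have hj : 0 < j.val := by rw [Fin.lt_def] at h3; omega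
        exact Or.inl ⟨hj, congrArg Fin.val (huniq _ _ _ (hP j hj) (hPadj j hj) h3 hij)⟩
      · have hi : 0 < i.val := by rw [Fin.lt_def] at h3; omega
        exact Or.inr ⟨hi, congrArg Fin.val (huniq _ _ _ (hP i hi) (hPadj i hi) h3 hij.symm)⟩
    · rintro (⟨hj, h3⟩ | ⟨hi, h3⟩)
      · rw [← Fin.ext h3]; exact hPadj j hj
      · rw [← Fin.ext h3]; exact (hPadj i hi).symm

/-- An SLO*-tree with at most one interior vertex of degree different from `d` is the extremal
tree. -/
lemma iso_of_SLO {n k d : ℕ} (hk : 1 ≤ k) (hd : 2 ≤ d) (hn : 2 + k * (d - 1) ≤ n)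
    {G : SimpleGraph (Fin n)} (hG : inClassTd k d G) (hS : IsSLOStarTree G) (v : Fin n)
    (hv : ∀ w, IsInterior G w → w ≠ v → G.degree w = d) : Nonempty (G ≃g optTree n k d) := by
  have hkn := opt_bound hd hn
  obtain ⟨hT, hcard, hdeg⟩ := hG
  obtain ⟨-, v₀, lt, ⟨hlt, h1, h2, h3⟩, h4⟩ := hS
  obtain ⟨σ, hσ⟩ := exists_numbering lt hlt
  obtain ⟨H, e, he⟩ : ∃ H : SimpleGraph (Fin n), ∃ e : H ≃g G, ∀ i, e i = σ i :=
    ⟨G.comap σ, SimpleGraph.Iso.comap σ G, fun _ => rfl⟩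
  have hlt' : ∀ i j, lt (e i) (e j) ↔ i < j := fun i j => by rw [he, he, hσ]
  have hH : H.IsTree := e.isTree_iff.mpr hT.1
  have hv0 : v₀ = e (e.symm v₀) := by simp
  rw [hv0] at h1 h2
  obtain ⟨p, hp⟩ := spiral_of_SLO hH (u₀ := e.symm v₀)
    (fun i j hij => by
      have := h1 _ _ ((hlt' i j).mpr hij)
      rwa [iso_dist e hH.1, iso_dist e hH.1] at this)
    (fun i i' j j' hi hc hc' => (hlt' _ _).mp (h2 _ _ _ _ ((hlt' _ _).mpr hi)
      ((iso_child e hH.1 _ _ _).mpr hc) ((iso_child e hH.1 _ _ _).mpr hc')))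
  have hbd : ∀ i, IsBoundary G (e i) ↔ ¬ IsInterior G (e i) := fun i => by
    rw [← isInterior_of_not_boundary hT, not_not]
  obtain ⟨T, hTn, hTT⟩ := exists_threshold n (fun j => ∃ h : j < n, IsInterior G (e ⟨j, h⟩)) (by
    rintro i j hij hj ⟨_, h⟩
    refine ⟨by omega, ?_⟩
    rcases Nat.eq_or_lt_of_le hij with rfl | hij
    · exact h
    · by_contra hc
      exact (hbd _).mp (h3 _ _ ((hlt' ⟨i, by omega⟩ ⟨j, hj⟩).mpr hij) ((hbd _).mpr hc)) h)
  have hinter : ∀ i : Fin n, IsInterior G (e i) ↔ i.val < T := by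
    intro i
    rw [← hTT i.val i.isLt]
    exact ⟨fun h => ⟨i.isLt, h⟩, fun ⟨_, h⟩ => h⟩
  have hTk : T = k := by
    rw [← hcard, ← card_seg hTn]
    refine Finset.card_bij (fun i _ => e i) ?_ (fun _ _ _ _ h => e.injective h) ?_
    · intro i hi
      simp only [interiorFinset, Finset.mem_filter, Finset.mem_univ, true_and]
      exact (hinter i).mpr (mem_seg.mp hi)
    · intro v hv
      simp only [interiorFinset, Finset.mem_filter, Finset.mem_univ, true_and] at hv
      refine ⟨e.symm v, mem_seg.mpr ((hinter _).mp ?_), by simp⟩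
      simpa using hv
  subst hTk
  have hSort : Sorted T d H := by
    refine ⟨hH, ?_, ?_⟩
    · intro i hi
      rw [← iso_degree e]
      exact hdeg _ ((hinter i).mpr hi)
    · intro i hi
      rw [← iso_degree e]
      exact (hbd i).mpr (fun hc => by have := (hinter i).mp hc; omega)
  -- by monotonicity of the degrees, the exceptional vertex may be taken to be the last one
  have hdlt : ∀ i : Fin n, i.val + 1 < T → H.degree i = d := by
    intro i hi
    by_cases hiv : e i = v
    · have hl : IsInterior G (e ⟨T - 1, by omega⟩) := (hinter _).mpr (by simp only; omega)
      have hii : IsInterior G (e i) := (hinter i).mpr (by omega)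
      have h5 := h4 _ _ ((hlt' i ⟨T - 1, by omega⟩).mpr (Fin.lt_def.mpr (by simp only; omega))) hii hl
      have h6 := hv _ hl (fun hc => by
        have := e.injective (hc.trans hiv.symm)
        rw [Fin.ext_iff] at this
        simp only at this
        omega)
      have h7 := hdeg _ hii
      rw [iso_degree e] at h5 h7
      omega
    · rw [← iso_degree e]
      exact hv _ ((hinter i).mpr (by omega)) hiv
  have hds : ∀ a, a + 1 ≤ T → dsum H a = a * d := by
    intro a
    induction a with
    | zero => intro _; simp [dsum, seg]
    | succ a ih =>
      intro ha
      have h5 := dsum_succ H ⟨a, by omega⟩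
      rw [hdlt _ (by simp only; omega)] at h5
      simp only at h5
      rw [h5, ih (by omega), Nat.add_mul]
      omega
  have hdeq : ∀ i, H.degree i = (optTree n T d).degree i := by
    intro i
    rcases lt_trichotomy (i.val + 1) T with hi | hi | hi
    · rw [hdlt i hi, opt_deg_lt hd hn i hi]
    · have h5 := dsum_succ H i
      have h6 := hds i.val (by omega)
      have h7 := hSort.dsum_eq hTn (i.val + 1) (by omega) (by omega)
      have h8 := opt_deg_last hd hn i hi
      rw [show T - 1 = i.val by omega] at h8
      omega
    · rw [hSort.deg_ge i (by omega), opt_deg_ge hk i (by omega)]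
  have := hp.unique (opt_spiral n T d) hdeq
  exact ⟨this ▸ e.symm⟩

lemma degrees_of_iso {n k d : ℕ} (hk : 1 ≤ k) (hd : 2 ≤ d) (hn : 2 + k * (d - 1) ≤ n)
    {G : SimpleGraph (Fin n)} (e : G ≃g optTree n k d) :
    ∃ v, IsInterior G v ∧ G.degree v = d + ∑ w ∈ interiorFinset G, (G.degree w - d) ∧
      ∀ w, IsInterior G w → w ≠ v → G.degree w = d := by
  have hkn := opt_bound hd hn
  have hother : ∀ w, IsInterior G w → w ≠ e.symm ⟨k - 1, by omega⟩ → G.degree w = d := by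
    intro w hw hne
    rw [← iso_interior e, opt_interior hk hd hn] at hw
    rw [← iso_degree e]
    apply opt_deg_lt hd hn
    by_contra hc
    apply hne
    rw [← e.symm_apply_apply w]
    congr 1
    exact Fin.ext (by simp only; omega)
  have hinter : IsInterior G (e.symm ⟨k - 1, by omega⟩) := by
    rw [← iso_interior e, opt_interior hk hd hn, e.apply_symm_apply]
    simp only; omega
  refine ⟨e.symm ⟨k - 1, by omega⟩, hinter, ?_, hother⟩
  rw [Finset.sum_eq_single (e.symm ⟨k - 1, by omega⟩)]
  · have h1 := opt_deg_last_ge hd hn ⟨k - 1, by omega⟩ (by simp only; omega)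
    have h2 := iso_degree e (e.symm ⟨k - 1, by omega⟩)
    rw [e.apply_symm_apply] at h2
    omega
  · intro w hw hne
    simp only [interiorFinset, Finset.mem_filter, Finset.mem_univ, true_and] at hw
    rw [hother w hw hne, Nat.sub_self]
  · intro hc
    exact absurd (by simp only [interiorFinset, Finset.mem_filter, Finset.mem_univ, true_and]; exact hinter) hc

/-- **Theorem 2.** A tree `G` has the Faber-Krahn property in the class
`T_d^(n,k)` if and only if it is an SLO*-tree in which exactly one interior
vertex has degree `d° = d + Σ_{v ∈ V₀} (d_v - d)` and all other interior
vertices have degree `d`; `G` is then uniquely determined up to isomorphism. -/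
theorem faberKrahn_Td (n k d : ℕ) (hd : 2 ≤ d) (hk1 : 1 ≤ k) (hkn : k + 1 ≤ n)
    (G : SimpleGraph (Fin n)) (hG : inClassTd k d G) :
    (hasFKTd k d G ↔
      (IsSLOStarTree G ∧
        ∃ v, IsInterior G v ∧
          G.degree v = d + ∑ w ∈ interiorFinset G, (G.degree w - d) ∧
          ∀ w, IsInterior G w → w ≠ v → G.degree w = d)) ∧
    (hasFKTd k d G → ∀ G' : SimpleGraph (Fin n), hasFKTd k d G' →
        Nonempty (G ≃g G')) := by
  obtain ⟨hn, -, hiso⟩ := compare hk1 hd hG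
  have hopt : hasFKTd k d G → Nonempty (G ≃g optTree n k d) := fun h =>
    hiso (le_antisymm (h.2 _ (opt_class hk1 hd hn)) (compare hk1 hd hG).2.1)
  refine ⟨⟨fun h => ?_, fun h => ?_⟩, fun h G' h' => ?_⟩
  · obtain ⟨e⟩ := hopt h
    exact ⟨iso_SLO e (opt_SLO hk1 hd hn), degrees_of_iso hk1 hd hn e⟩
  · obtain ⟨hS, v, -, -, hv⟩ := h
    obtain ⟨e⟩ := iso_of_SLO hk1 hd hn hG hS v hv
    refine ⟨hG, fun G' hG' => ?_⟩
    rw [iso_lambda e]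
    exact (compare hk1 hd hG').2.1
  · obtain ⟨e⟩ := hopt h
    obtain ⟨e'⟩ := (compare hk1 hd h'.1).2.2
      (le_antisymm (h'.2 _ (opt_class hk1 hd hn)) (compare hk1 hd h'.1).2.1)
    exact ⟨e.trans e'.symm⟩

end FK
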